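/- arXiv:2310.16592 — 2 statements merged into one kernel-verified Lean document; each statement's English description precedes it below -/
import Mathlib

section
/- (Telescoped inequality, Appendix C of the paper.) In the over-the-air federated PG model, if 0 < α ≤ 1/(m_h·L), then for every integer K ≥ 1, E[J(θ^K)] − J(θ^0) ≤ (α·((M−1)·σ_h² − M·(N+1)·m_h²)/(2·M·N·m_h))·Σ_{k=0}^{K−1} E[‖∇J(θ^k)‖²] + α·K·σ̄²/(2·m_h·N²) + α·K·σ_h²·V²/(2·M·N·m_h). -/
open MeasureTheory ProbabilityTheory Gradient

/-- The family `{h_i}_i ∪ {X_{i,m}}_{i,m} ∪ {n}` combined into a single family of random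
variables with common codomain `ℝ × ℝ^d`; each member generates exactly the σ-algebra of the
corresponding original random variable, so (conditional) mutual independence of this family is
equivalent to (conditional) mutual independence of the original family. -/
def otaFam {d N M : ℕ} {Ω : Type*}
    (h : Fin N → Ω → ℝ) (X : Fin N → Fin M → Ω → EuclideanSpace ℝ (Fin d))
    (n : Ω → EuclideanSpace ℝ (Fin d)) :
    Fin N ⊕ (Fin N × Fin M) ⊕ Unit → Ω → ℝ × EuclideanSpace ℝ (Fin d)
  | Sum.inl i => fun ω => (h i ω, 0)
  | Sum.inr (Sum.inl (i, m)) => fun ω => (0, X i m ω)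
  | Sum.inr (Sum.inr _) => fun ω => (0, n ω)

theorem kernel_ae_iIndepFun {α Ω ι β : Type*} [Finite ι] {mα : MeasurableSpace α}
    {mΩ : MeasurableSpace Ω} [mβ : MeasurableSpace β] [MeasurableSpace.CountablyGenerated β]
    {κ : Kernel α Ω} {ν : Measure α} {f : ι → Ω → β} (hf : ∀ i, Measurable (f i))
    (hi : Kernel.iIndepFun f κ ν) : ∀ᵐ a ∂ν, iIndepFun f (κ a) := by
  classical
  set C : Set (Set β) := generateSetAlgebra (MeasurableSpace.countableGeneratingSet β) with hC
  have hCc : C.Countable :=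
    countable_generateSetAlgebra (MeasurableSpace.countable_countableGeneratingSet)
  have hCg : MeasurableSpace.generateFrom C = mβ := by
    rw [hC, generateFrom_generateSetAlgebra_eq, MeasurableSpace.generateFrom_countableGeneratingSet]
  have hCpi : IsPiSystem C := by
    intro s hs t ht _
    exact isSetAlgebra_generateSetAlgebra.inter_mem hs ht
  have hCm : ∀ s ∈ C, MeasurableSet s := fun s hs => by
    rw [← hCg]; exact MeasurableSpace.measurableSet_generateFrom hs
  have : Countable C := hCc.to_subtype
  have key : ∀ᵐ a ∂ν, ∀ (S : Finset ι) (s : ι → C),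
      κ a (⋂ i ∈ S, f i ⁻¹' (s i : Set β)) = ∏ i ∈ S, κ a (f i ⁻¹' (s i : Set β)) := by
    rw [ae_all_iff]; intro S
    rw [ae_all_iff]; intro s
    exact Kernel.iIndepFun.measure_inter_preimage_eq_mul _ f hi S (fun i _ => hCm _ (s i).2)
  filter_upwards [key] with a ha
  refine iIndepSets.iIndep (m := fun i => MeasurableSpace.comap (f i) mβ) (fun i => (hf i).comap_le)
    (fun i => {t | ∃ s ∈ C, f i ⁻¹' s = t}) (fun i => hCpi.comap (f i)) (fun i => ?_) ?_
  · rw [← hCg, MeasurableSpace.comap_generateFrom]; rfl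
  · rw [iIndepSets_iff]
    intro S t ht
    have h1 : ∀ i, ∃ s : C, i ∈ S → f i ⁻¹' (s : Set β) = t i := by
      intro i
      by_cases hiS : i ∈ S
      · obtain ⟨s, hs, hst⟩ := ht i hiS
        exact ⟨⟨s, hs⟩, fun _ => hst⟩
      · exact ⟨⟨∅, isSetAlgebra_generateSetAlgebra.empty_mem⟩, fun h => absurd h hiS⟩
    choose s hs using h1
    have := ha S s
    have e1 : (⋂ i ∈ S, f i ⁻¹' (s i : Set β)) = ⋂ i ∈ S, t i :=
      Set.iInter₂_congr hs
    rw [e1, Finset.prod_congr rfl (fun i hi => by rw [hs i hi])] at this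
    exact this

theorem descent_lemma {E : Type*} [NormedAddCommGroup E] [InnerProductSpace ℝ E] [CompleteSpace E]
    {J : E → ℝ} (hJ : Differentiable ℝ J) {L : ℝ}
    (hLip : ∀ x y, ‖gradient J x - gradient J y‖ ≤ L * ‖x - y‖) (x y : E) :
    J y ≤ J x + inner ℝ (gradient J x) (y - x) + L / 2 * ‖y - x‖ ^ 2 := by
  set u := y - x
  have hd : ∀ t : ℝ, HasDerivAt (fun t : ℝ => J (x + t • u))
      (inner ℝ (gradient J (x + t • u)) u) t := by
    intro t
    have h1 : HasDerivAt (fun t : ℝ => x + t • u) u t := by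
      simpa using ((hasDerivAt_id t).smul_const u).const_add x
    have h2 := (hJ (x + t • u)).hasGradientAt.hasFDerivAt.comp_hasDerivAt t h1
    simpa [InnerProductSpace.toDual_apply_apply] using! h2
  have hB : ∀ t : ℝ, HasDerivAt
      (fun t : ℝ => J x + t * inner ℝ (gradient J x) u + L / 2 * ‖u‖ ^ 2 * t ^ 2)
      (inner ℝ (gradient J x) u + L * ‖u‖ ^ 2 * t) t := by
    intro t
    have h1 := (((hasDerivAt_id t).mul_const (inner ℝ (gradient J x) u)).const_add (J x)).add
      ((hasDerivAt_pow 2 t).const_mul (L / 2 * ‖u‖ ^ 2))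
    refine h1.congr_deriv ?_
    simp; ring
  have := image_le_of_deriv_right_le_deriv_boundary (a := 0) (b := 1)
    (fun t _ => (hd t).continuousAt.continuousWithinAt) (fun t _ => (hd t).hasDerivWithinAt)
    (by simp) (fun t _ => (hB t).continuousAt.continuousWithinAt)
    (fun t _ => (hB t).hasDerivWithinAt) (fun t ht => ?_) (x := 1) (by simp)
  · simpa [u] using this
  · have h1 : inner ℝ (gradient J (x + t • u) - gradient J x) u ≤ L * ‖u‖ ^ 2 * t := by
      refine (real_inner_le_norm _ _).trans ?_
      have := hLip (x + t • u) x
      rw [add_sub_cancel_left, norm_smul, Real.norm_of_nonneg ht.1] at this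
      nlinarith [norm_nonneg u]
    rw [inner_sub_left] at h1
    linarith
theorem memLp_integrable_inner {Ω E : Type*} [MeasurableSpace Ω] {P : Measure Ω}
    [NormedAddCommGroup E] [InnerProductSpace ℝ E] {f g : Ω → E}
    (hf : MemLp f 2 P) (hg : MemLp g 2 P) : Integrable (fun ω => inner ℝ (f ω) (g ω)) P := by
  refine (hf.norm.integrable_mul hg.norm).mono'
    (hf.aestronglyMeasurable.inner hg.aestronglyMeasurable)
    (Filter.Eventually.of_forall fun ω => ?_)
  exact norm_inner_le_norm _ _

theorem ota_sum_bound {N M : ℕ} (hN : 0 < N) (hM : 0 < M) (σ mh V2 G : ℝ) :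
    ∑ p : Fin N × Fin M, ∑ q : Fin N × Fin M,
      (if p.1 = q.1 then σ else mh ^ 2) * (if p = q then V2 else G)
      = N * M * (σ * V2 + (M - 1) * σ * G + M * (N - 1) * mh ^ 2 * G) := by
  have hterm : ∀ p q : Fin N × Fin M,
      (if p.1 = q.1 then σ else mh ^ 2) * (if p = q then V2 else G)
      = mh ^ 2 * G + (if p.1 = q.1 then (σ * G - mh ^ 2 * G) else 0)
        + (if p = q then (σ * V2 - σ * G) else 0) := by
    intro p q
    by_cases h1 : p = q
    · subst h1; simp
    · by_cases h2 : p.1 = q.1 <;> simp [h1, h2]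
  have h3 : ∀ p : Fin N × Fin M,
      ∑ q : Fin N × Fin M, (if p.1 = q.1 then (σ * G - mh ^ 2 * G) else 0)
        = M * (σ * G - mh ^ 2 * G) := by
    intro p
    rw [Fintype.sum_prod_type, Finset.sum_eq_single p.1]
    · simp; ring
    · intro b _ hb
      simp [hb.symm]
    · simp
  simp only [hterm, Finset.sum_add_distrib, h3]
  simp
  ring

theorem ota_pure {d N M : ℕ} (hN : 0 < N) (hM : 0 < M) {Ω : Type*} [MeasurableSpace Ω]
    (P : Measure Ω) [IsProbabilityMeasure P]
    (h : Fin N → Ω → ℝ) (X : Fin N → Fin M → Ω → EuclideanSpace ℝ (Fin d))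
    (n : Ω → EuclideanSpace ℝ (Fin d)) (m_h σ V s : ℝ) (g : EuclideanSpace ℝ (Fin d))
    (hind : iIndepFun (otaFam h X n) P)
    (hh2 : ∀ i, MemLp (h i) 2 P) (hX2 : ∀ i m, MemLp (X i m) 2 P) (hn2 : MemLp n 2 P)
    (hEh : ∀ i, ∫ ω, h i ω ∂P = m_h) (hEh2 : ∀ i, ∫ ω, (h i ω) ^ 2 ∂P = σ)
    (hσ : 0 ≤ σ)
    (hEn : ∫ ω, n ω ∂P = 0) (hVn : ∫ ω, ‖n ω‖ ^ 2 ∂P ≤ s)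
    (hEX : ∀ i m, ∫ ω, X i m ω ∂P = g) (hVX : ∀ i m, ∫ ω, ‖X i m ω‖ ^ 2 ∂P ≤ V ^ 2)
    (v : Ω → EuclideanSpace ℝ (Fin d))
    (hv : v = fun ω => (∑ i : Fin N, h i ω • ((1 / (M : ℝ)) • ∑ m : Fin M, X i m ω)) + n ω) :
    MemLp v 2 P ∧ ∫ ω, v ω ∂P = ((N : ℝ) * m_h) • g ∧
    ∫ ω, ‖v ω‖ ^ 2 ∂P ≤ (N : ℝ) / M *
      (σ * V ^ 2 + (M - 1) * σ * ‖g‖ ^ 2 + M * (N - 1) * m_h ^ 2 * ‖g‖ ^ 2) + s := by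
  have hM' : (M : ℝ) ≠ 0 := by positivity
  have hmeas : ∀ j, AEMeasurable (otaFam h X n j) P := by
    rintro (i | ⟨i, m⟩ | u)
    · exact (hh2 i).aestronglyMeasurable.aemeasurable.prodMk aemeasurable_const
    · exact aemeasurable_const.prodMk (hX2 i m).aestronglyMeasurable.aemeasurable
    · exact aemeasurable_const.prodMk hn2.aestronglyMeasurable.aemeasurable
  -- independence facts
  have ihX : ∀ i (p : Fin N × Fin M), IndepFun (h i) (X p.1 p.2) P := fun i p =>
    (hind.indepFun (i := Sum.inl i) (j := Sum.inr (Sum.inl p)) (by simp)).comp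
      measurable_fst measurable_snd
  have ihh : ∀ i j, i ≠ j → IndepFun (h i) (h j) P := fun i j hij =>
    (hind.indepFun (i := Sum.inl i) (j := Sum.inl j) (by simpa using hij)).comp
      measurable_fst measurable_fst
  have iXX : ∀ p q : Fin N × Fin M, p ≠ q → IndepFun (X p.1 p.2) (X q.1 q.2) P := fun p q hpq =>
    (hind.indepFun (i := Sum.inr (Sum.inl p)) (j := Sum.inr (Sum.inl q)) (by simpa using hpq)).comp
      measurable_snd measurable_snd
  have iXn : ∀ p : Fin N × Fin M, IndepFun (X p.1 p.2) n P := fun p =>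
    (hind.indepFun (i := Sum.inr (Sum.inl p)) (j := Sum.inr (Sum.inr ())) (by simp)).comp
      measurable_snd measurable_snd
  have ihhXX : ∀ p q : Fin N × Fin M, IndepFun (fun ω => h p.1 ω * h q.1 ω)
      (fun ω => inner ℝ (X p.1 p.2 ω) (X q.1 q.2 ω)) P := fun p q =>
    (hind.indepFun_prodMk_prodMk₀ hmeas (Sum.inl p.1) (Sum.inl q.1)
      (Sum.inr (Sum.inl p)) (Sum.inr (Sum.inl q)) (by simp) (by simp) (by simp) (by simp)).comp
      (φ := fun z : (ℝ × EuclideanSpace ℝ (Fin d)) × (ℝ × EuclideanSpace ℝ (Fin d)) =>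
        z.1.1 * z.2.1)
      (ψ := fun z : (ℝ × EuclideanSpace ℝ (Fin d)) × (ℝ × EuclideanSpace ℝ (Fin d)) =>
        inner ℝ z.1.2 z.2.2) (by fun_prop) (by fun_prop)
  have ihXn : ∀ p : Fin N × Fin M, IndepFun 
      (fun ω => inner ℝ (X p.1 p.2 ω) (n ω)) (h p.1) P := fun p =>
    (hind.indepFun_prodMk₀ hmeas (Sum.inr (Sum.inl p)) (Sum.inr (Sum.inr ())) (Sum.inl p.1)
       (by simp) (by simp)).comp
      (φ := fun z : (ℝ × EuclideanSpace ℝ (Fin d)) × (ℝ × EuclideanSpace ℝ (Fin d)) =>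
        inner ℝ z.1.2 z.2.2) (ψ := Prod.fst) (by fun_prop) (by fun_prop)
  have hh1 : ∀ i, Integrable (h i) P := fun i => (hh2 i).integrable (by norm_num)
  have hX1 : ∀ i m, Integrable (X i m) P := fun i m => (hX2 i m).integrable (by norm_num)
  have hn1 : Integrable n P := hn2.integrable (by norm_num)
  -- the products
  set Z : Fin N × Fin M → Ω → EuclideanSpace ℝ (Fin d) := fun p ω => h p.1 ω • X p.1 p.2 ω with hZ
  have hvZ : v = fun ω => (1 / (M : ℝ)) • (∑ p, Z p ω) + n ω := by
    rw [hv]; funext ω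
    congr 1
    simp only [hZ, Fintype.sum_prod_type, Finset.smul_sum]
    refine Finset.sum_congr rfl fun i _ => Finset.sum_congr rfl fun m _ => ?_
    rw [smul_comm]
  have hZ2 : ∀ p, MemLp (Z p) 2 P := by
    intro p
    have hm : AEStronglyMeasurable (Z p) P :=
      (hh2 p.1).aestronglyMeasurable.smul (hX2 p.1 p.2).aestronglyMeasurable
    rw [memLp_two_iff_integrable_sq_norm hm]
    have i1 : Integrable (fun ω => (h p.1 ω) ^ 2) P := (hh2 p.1).integrable_sq
    have i2 : Integrable (fun ω => ‖X p.1 p.2 ω‖ ^ 2) P := (hX2 p.1 p.2).integrable_norm_pow (by norm_num)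
    have ii : IndepFun (fun ω => (h p.1 ω) ^ 2) (fun ω => ‖X p.1 p.2 ω‖ ^ 2) P :=
      (ihX p.1 p).comp (φ := fun x : ℝ => x ^ 2)
        (ψ := fun x : EuclideanSpace ℝ (Fin d) => ‖x‖ ^ 2) (by fun_prop) (by fun_prop)
    refine (ii.integrable_mul i1 i2).congr (Filter.Eventually.of_forall fun ω => ?_)
    simp [hZ, norm_smul, mul_pow]
  have hZ1 : ∀ p, Integrable (Z p) P := fun p => (hZ2 p).integrable (by norm_num)
  have hS2 : MemLp (fun ω => ∑ p, Z p ω) 2 P := memLp_finsetSum _ fun p _ => hZ2 p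
  have hv2 : MemLp v 2 P := by
    rw [hvZ]; exact (hS2.const_smul (1 / (M : ℝ))).add hn2
  have hEZ : ∀ p, ∫ ω, Z p ω ∂P = m_h • g := by
    intro p
    rw [← hEh p.1, ← hEX p.1 p.2]
    exact (ihX p.1 p).integral_fun_smul_eq_smul_integral (hh2 p.1).aestronglyMeasurable
      (hX2 p.1 p.2).aestronglyMeasurable
  refine ⟨hv2, ?_, ?_⟩
  · have iS : Integrable (fun ω => (1 / (M : ℝ)) • ∑ p, Z p ω) P :=
      (hS2.const_smul (1 / (M : ℝ))).integrable (by norm_num)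
    rw [hvZ, integral_add iS hn1,
      integral_smul, integral_finsetSum _ (fun p _ => hZ1 p), hEn, add_zero]
    simp only [hEZ, Finset.sum_const, Finset.card_univ, Fintype.card_prod, Fintype.card_fin]
    rw [← Nat.cast_smul_eq_nsmul ℝ, smul_smul, smul_smul]
    congr 1; push_cast; field_simp
  · have hexp : ∀ ω, ‖v ω‖ ^ 2 = (1 / (M : ℝ)) ^ 2 * (∑ p, ∑ q, inner ℝ (Z p ω) (Z q ω))
        + (2 / (M : ℝ)) * (∑ p, inner ℝ (Z p ω) (n ω)) + ‖n ω‖ ^ 2 := by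
      intro ω
      rw [hvZ]
      simp only
      rw [norm_add_sq_real, norm_smul, mul_pow, ← real_inner_self_eq_norm_sq (∑ p, Z p ω),
        sum_inner, real_inner_smul_left, sum_inner]
      simp only [inner_sum]
      simp; ring
    have iZZ : ∀ p q, Integrable (fun ω => inner ℝ (Z p ω) (Z q ω)) P :=
      fun p q => memLp_integrable_inner (hZ2 p) (hZ2 q)
    have iZn : ∀ p, Integrable (fun ω => inner ℝ (Z p ω) (n ω)) P :=
      fun p => memLp_integrable_inner (hZ2 p) hn2
    have in2 : Integrable (fun ω => ‖n ω‖ ^ 2) P := hn2.integrable_norm_pow (by norm_num)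
    have EZn : ∀ p, ∫ ω, inner ℝ (Z p ω) (n ω) ∂P = 0 := by
      intro p
      have e : (fun ω => inner ℝ (Z p ω) (n ω))
          = fun ω => inner ℝ (X p.1 p.2 ω) (n ω) * h p.1 ω := by
        funext ω; simp [hZ, real_inner_smul_left, mul_comm]
      rw [e, (ihXn p).integral_fun_mul_eq_mul_integral
        (memLp_integrable_inner (hX2 p.1 p.2) hn2).aestronglyMeasurable
        (hh2 p.1).aestronglyMeasurable]
      have : ∫ ω, inner ℝ (X p.1 p.2 ω) (n ω) ∂P
          = inner ℝ (∫ ω, X p.1 p.2 ω ∂P) (∫ ω, n ω ∂P) :=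
        (iXn p).integral_bilin (hX1 p.1 p.2) hn1 (innerSL ℝ)
      rw [this, hEn]; simp
    have EZZ : ∀ p q, ∫ ω, inner ℝ (Z p ω) (Z q ω) ∂P ≤
        (if p.1 = q.1 then σ else m_h ^ 2) * (if p = q then V ^ 2 else ‖g‖ ^ 2) := by
      intro p q
      have e : (fun ω => inner ℝ (Z p ω) (Z q ω))
          = fun ω => (h p.1 ω * h q.1 ω) * inner ℝ (X p.1 p.2 ω) (X q.1 q.2 ω) := by
        funext ω; simp [hZ, real_inner_smul_left, real_inner_smul_right]; ring
      rw [e, (ihhXX p q).integral_fun_mul_eq_mul_integral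
        ((hh2 p.1).aestronglyMeasurable.mul (hh2 q.1).aestronglyMeasurable)
        (memLp_integrable_inner (hX2 p.1 p.2) (hX2 q.1 q.2)).aestronglyMeasurable]
      have e1 : ∫ ω, h p.1 ω * h q.1 ω ∂P = if p.1 = q.1 then σ else m_h ^ 2 := by
        split_ifs with hpq
        · rw [← hpq, ← hEh2 p.1]; simp only [sq]
        · rw [(ihh _ _ hpq).integral_fun_mul_eq_mul_integral (hh2 p.1).aestronglyMeasurable
            (hh2 q.1).aestronglyMeasurable, hEh, hEh, sq]
      have e2 : ∫ ω, inner ℝ (X p.1 p.2 ω) (X q.1 q.2 ω) ∂P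
          ≤ if p = q then V ^ 2 else ‖g‖ ^ 2 := by
        split_ifs with hpq
        · subst hpq
          simp only [real_inner_self_eq_norm_sq]
          exact hVX _ _
        · have : ∫ ω, inner ℝ (X p.1 p.2 ω) (X q.1 q.2 ω) ∂P
              = inner ℝ (∫ ω, X p.1 p.2 ω ∂P) (∫ ω, X q.1 q.2 ω ∂P) :=
            (iXX p q hpq).integral_bilin (hX1 p.1 p.2) (hX1 q.1 q.2) (innerSL ℝ)
          rw [this, hEX, hEX, real_inner_self_eq_norm_sq]
      rw [e1]
      refine mul_le_mul_of_nonneg_left e2 ?_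
      split_ifs <;> positivity
    have i1 : Integrable (fun ω => ∑ p, ∑ q, inner ℝ (Z p ω) (Z q ω)) P :=
      integrable_finsetSum _ fun p _ => integrable_finsetSum _ fun q _ => iZZ p q
    have i2 : Integrable (fun ω => ∑ p, inner ℝ (Z p ω) (n ω)) P :=
      integrable_finsetSum _ fun p _ => iZn p
    simp only [hexp]
    have i1' := i1.const_mul ((1 / (M : ℝ)) ^ 2)
    have i2' := i2.const_mul (2 / (M : ℝ))
    rw [integral_add (f := fun ω => (1 / (M : ℝ)) ^ 2 * (∑ p, ∑ q, inner ℝ (Z p ω) (Z q ω))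
        + (2 / (M : ℝ)) * (∑ p, inner ℝ (Z p ω) (n ω))) (i1'.add i2') in2,
      integral_add i1' i2', integral_const_mul, integral_const_mul,
      integral_finsetSum _ (fun p _ => iZn p),
      integral_finsetSum _ (fun p _ => integrable_finsetSum _ fun q _ => iZZ p q)]
    simp only [EZn, Finset.sum_const_zero, mul_zero, add_zero]
    refine add_le_add ?_ hVn
    have b : ∑ p, ∫ ω, ∑ q, inner ℝ (Z p ω) (Z q ω) ∂P ≤
        ∑ p : Fin N × Fin M, ∑ q : Fin N × Fin M,
        (if p.1 = q.1 then σ else m_h ^ 2) * (if p = q then V ^ 2 else ‖g‖ ^ 2) := by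
      refine Finset.sum_le_sum fun p _ => ?_
      rw [integral_finsetSum _ (fun q _ => iZZ p q)]
      exact Finset.sum_le_sum fun q _ => EZZ p q
    rw [ota_sum_bound hN hM] at b
    refine (mul_le_mul_of_nonneg_left b (by positivity)).trans (le_of_eq ?_)
    field_simp

theorem condExp_comp_of_indep {Ω β F : Type*} {m mΩ : MeasurableSpace Ω} {μ : Measure Ω}
    [IsProbabilityMeasure μ] [mβ : MeasurableSpace β]
    [NormedAddCommGroup F] [NormedSpace ℝ F] [CompleteSpace F]
    (hm : m ≤ mΩ) {f : Ω → β} (hf : AEMeasurable f μ)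
    (hi : Indep (MeasurableSpace.comap f mβ) m μ) {φ : β → F} (hφ : StronglyMeasurable φ) :
    μ[fun ω => φ (f ω) | m] =ᵐ[μ] fun _ => ∫ ω, φ (f ω) ∂μ := by
  have hi' : Indep (MeasurableSpace.comap (hf.mk f) mβ) m μ := by
    rw [Indep_iff] at hi ⊢
    rintro t1 t2 ⟨s, hs, rfl⟩ ht2
    have h1 := hi (f ⁻¹' s) t2 ⟨s, hs, rfl⟩ ht2
    have e : (f ⁻¹' s : Set Ω) =ᵐ[μ] (hf.mk f ⁻¹' s : Set Ω) := by
      filter_upwards [hf.ae_eq_mk] with ω hω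
      change (f ω ∈ s) = (hf.mk f ω ∈ s)
      rw [hω]
    rw [← measure_congr e, ← h1]
    exact (measure_congr (e.inter (ae_eq_refl t2))).symm
  have e : (fun ω => φ (f ω)) =ᵐ[μ] fun ω => φ (hf.mk f ω) := by
    filter_upwards [hf.ae_eq_mk] with ω hω
    rw [hω]
  refine (condExp_congr_ae e).trans ?_
  rw [integral_congr_ae e]
  exact condExp_indep_eq hf.measurable_mk.comap_le hm
    (hφ.comp_measurable (comap_measurable (hf.mk f))) hi'

theorem memLp_two_condExpKernel_ae {Ω F : Type*} {m : MeasurableSpace Ω} [mΩ : MeasurableSpace Ω]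
    [StandardBorelSpace Ω]
    {μ : Measure Ω} [IsProbabilityMeasure μ] [NormedAddCommGroup F]
    {f : Ω → F} (hf : MemLp f 2 μ) : ∀ᵐ ω ∂μ, MemLp f 2 (condExpKernel μ m ω) := by
  have h1 : Integrable f μ := hf.integrable (by norm_num)
  have h2 : Integrable (fun ω => ‖f ω‖ ^ 2) μ := hf.integrable_norm_pow (by norm_num)
  filter_upwards [h1.condExpKernel_ae (m := m), h2.condExpKernel_ae (m := m)] with ω a b
  exact (memLp_two_iff_integrable_sq_norm a.aestronglyMeasurable).2 b

theorem ota_cond {d N M : ℕ} (hN : 0 < N) (hM : 0 < M) {Ω : Type*}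
    (m : MeasurableSpace Ω) [mΩ : MeasurableSpace Ω]
    [StandardBorelSpace Ω] [Nonempty Ω]
    (μ : Measure Ω) [IsProbabilityMeasure μ] (hm : m ≤ mΩ)
    (h : Fin N → Ω → ℝ) (X : Fin N → Fin M → Ω → EuclideanSpace ℝ (Fin d))
    (n : Ω → EuclideanSpace ℝ (Fin d)) (m_h σ V s : ℝ) (g : Ω → EuclideanSpace ℝ (Fin d))
    (hind : iCondIndepFun m hm (otaFam h X n) μ)
    (hh2 : ∀ i, MemLp (h i) 2 μ) (hX2 : ∀ i m, MemLp (X i m) 2 μ) (hn2 : MemLp n 2 μ)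
    (hhind : ∀ i, Indep (MeasurableSpace.comap (h i) inferInstance) m μ)
    (hnind : Indep (MeasurableSpace.comap n inferInstance) m μ)
    (hEh : ∀ i, ∫ ω, h i ω ∂μ = m_h) (hEh2 : ∀ i, ∫ ω, (h i ω) ^ 2 ∂μ = σ)
    (hσ : 0 ≤ σ)
    (hEn : ∫ ω, n ω ∂μ = 0) (hVn : ∫ ω, ‖n ω‖ ^ 2 ∂μ ≤ s)
    (hEX : ∀ i j, μ[X i j | m] =ᵐ[μ] g)
    (hVX : ∀ i j, ∀ᵐ ω ∂μ, (μ[fun ω' => ‖X i j ω'‖ ^ 2 | m]) ω ≤ V ^ 2)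
    (v : Ω → EuclideanSpace ℝ (Fin d))
    (hv : v = fun ω => (∑ i : Fin N, h i ω • ((1 / (M : ℝ)) • ∑ m : Fin M, X i m ω)) + n ω) :
    MemLp v 2 μ ∧ MemLp g 2 μ ∧ μ[v | m] =ᵐ[μ] (fun ω => ((N : ℝ) * m_h) • g ω) ∧
    ∫ ω, ‖v ω‖ ^ 2 ∂μ ≤ (N : ℝ) / M *
      (σ * V ^ 2 + ((M - 1) * σ + M * (N - 1) * m_h ^ 2) * ∫ ω, ‖g ω‖ ^ 2 ∂μ) + s := by
  have hmeas : ∀ j, AEMeasurable (otaFam h X n j) μ := by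
    rintro (i | ⟨i, m⟩ | u)
    · exact (hh2 i).aestronglyMeasurable.aemeasurable.prodMk aemeasurable_const
    · exact aemeasurable_const.prodMk (hX2 i m).aestronglyMeasurable.aemeasurable
    · exact aemeasurable_const.prodMk hn2.aestronglyMeasurable.aemeasurable
  have hg2 : MemLp g 2 μ :=
    MemLp.ae_eq (hEX ⟨0, hN⟩ ⟨0, hM⟩) ((hX2 ⟨0, hN⟩ ⟨0, hM⟩).condExp (by norm_num))
  -- independence under the kernel
  have hmk : ∀ j, ∀ᵐ a ∂μ.trim hm,
      otaFam h X n j =ᵐ[condExpKernel μ m a] (hmeas j).mk (otaFam h X n j) := by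
    intro j
    refine Measure.ae_ae_of_ae_comp ?_
    rw [condExpKernel_comp_trim]
    exact (hmeas j).ae_eq_mk
  have hindk : ∀ᵐ ω ∂μ, iIndepFun (otaFam h X n) (condExpKernel μ m ω) := by
    refine ae_of_ae_trim hm ?_
    have h1 : Kernel.iIndepFun (fun j => (hmeas j).mk (otaFam h X n j)) (condExpKernel μ m)
        (μ.trim hm) := Kernel.iIndepFun.congr' hind hmk
    have h2 := kernel_ae_iIndepFun (fun j => (hmeas j).measurable_mk) h1
    filter_upwards [h2, ae_all_iff.2 hmk] with a ha hb
    exact ha.congr fun j => (hb j).symm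
  -- conditional moments
  have khE : ∀ i, ∀ᵐ ω ∂μ, ∫ y, h i y ∂(condExpKernel μ m ω) = m_h := by
    intro i
    filter_upwards [condExp_ae_eq_integral_condExpKernel hm ((hh2 i).integrable (by norm_num)),
      condExp_comp_of_indep hm (hh2 i).aestronglyMeasurable.aemeasurable (hhind i)
        (φ := fun x => x) stronglyMeasurable_id] with ω h1 h2
    rw [← h1, h2, hEh]
  have khE2 : ∀ i, ∀ᵐ ω ∂μ, ∫ y, (h i y) ^ 2 ∂(condExpKernel μ m ω) = σ := by
    intro i
    filter_upwards [condExp_ae_eq_integral_condExpKernel hm ((hh2 i).integrable_sq),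
      condExp_comp_of_indep hm (hh2 i).aestronglyMeasurable.aemeasurable (hhind i)
        (φ := fun x : ℝ => x ^ 2) (by fun_prop)] with ω h1 h2
    rw [← h1, h2, hEh2]
  have knE : ∀ᵐ ω ∂μ, ∫ y, n y ∂(condExpKernel μ m ω) = 0 := by
    filter_upwards [condExp_ae_eq_integral_condExpKernel hm (hn2.integrable (by norm_num)),
      condExp_comp_of_indep hm hn2.aestronglyMeasurable.aemeasurable hnind
        (φ := fun x => x) stronglyMeasurable_id] with ω h1 h2
    rw [← h1, h2, hEn]
  have knE2 : ∀ᵐ ω ∂μ, ∫ y, ‖n y‖ ^ 2 ∂(condExpKernel μ m ω) ≤ s := by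
    filter_upwards [condExp_ae_eq_integral_condExpKernel hm (hn2.integrable_norm_pow (p := 2) (by norm_num)),
      condExp_comp_of_indep hm hn2.aestronglyMeasurable.aemeasurable hnind
        (φ := fun x : EuclideanSpace ℝ (Fin d) => ‖x‖ ^ 2)
        (by fun_prop)] with ω h1 h2
    rw [← h1, h2]; exact hVn
  have kXE : ∀ i j, ∀ᵐ ω ∂μ, ∫ y, X i j y ∂(condExpKernel μ m ω) = g ω := by
    intro i j
    filter_upwards [condExp_ae_eq_integral_condExpKernel hm ((hX2 i j).integrable (by norm_num)),
      hEX i j] with ω h1 h2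
    rw [← h1, h2]
  have kXE2 : ∀ i j, ∀ᵐ ω ∂μ, ∫ y, ‖X i j y‖ ^ 2 ∂(condExpKernel μ m ω) ≤ V ^ 2 := by
    intro i j
    filter_upwards [condExp_ae_eq_integral_condExpKernel hm
      ((hX2 i j).integrable_norm_pow (p := 2) (by norm_num)), hVX i j] with ω h1 h2
    rw [← h1]; exact h2
  set C : Ω → ℝ := fun ω => (N : ℝ) / M *
      (σ * V ^ 2 + ((M - 1) * σ + M * (N - 1) * m_h ^ 2) * ‖g ω‖ ^ 2) + s with hC
  have key : ∀ᵐ ω ∂μ, MemLp v 2 (condExpKernel μ m ω) ∧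
      ∫ y, v y ∂(condExpKernel μ m ω) = ((N : ℝ) * m_h) • g ω ∧
      ∫ y, ‖v y‖ ^ 2 ∂(condExpKernel μ m ω) ≤ C ω := by
    filter_upwards [hindk, ae_all_iff.2 khE, ae_all_iff.2 khE2, knE, knE2,
      ae_all_iff.2 fun i => ae_all_iff.2 (kXE i), ae_all_iff.2 fun i => ae_all_iff.2 (kXE2 i),
      ae_all_iff.2 fun i => memLp_two_condExpKernel_ae (m := m) (hh2 i),
      ae_all_iff.2 fun i => ae_all_iff.2 fun j => memLp_two_condExpKernel_ae (m := m) (hX2 i j),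
      memLp_two_condExpKernel_ae (m := m) hn2] with ω a1 a2 a3 a4 a5 a6 a7 a8 a9 a10
    obtain ⟨r1, r2, r3⟩ := ota_pure hN hM (condExpKernel μ m ω) h X n m_h σ V s (g ω) a1 a8 a9 a10
      a2 a3 hσ a4 a5 a6 a7 v hv
    refine ⟨r1, r2, r3.trans (le_of_eq ?_)⟩
    rw [hC]; ring
  have ig2 : Integrable (fun ω => ‖g ω‖ ^ 2) μ := hg2.integrable_norm_pow (by norm_num)
  have iC0 : Integrable (fun ω => σ * V ^ 2 +
      (((M : ℝ) - 1) * σ + M * (N - 1) * m_h ^ 2) * ‖g ω‖ ^ 2) μ :=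
    (integrable_const _).add (ig2.const_mul _)
  have iC : Integrable C μ :=
    (iC0.const_mul _).add (integrable_const s)
  have hvm : AEStronglyMeasurable v μ := by
    rw [hv]
    refine AEStronglyMeasurable.add ?_ hn2.aestronglyMeasurable
    refine Finset.aestronglyMeasurable_fun_sum _ fun i _ => ?_
    refine (hh2 i).aestronglyMeasurable.smul (AEStronglyMeasurable.fun_const_smul ?_ _)
    exact Finset.aestronglyMeasurable_fun_sum _ fun j _ => (hX2 i j).aestronglyMeasurable
  have hv2m : AEStronglyMeasurable (fun ω => ‖v ω‖ ^ 2) μ := hvm.norm.pow 2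
  have iv2 : Integrable (fun ω => ‖v ω‖ ^ 2) μ := by
    refine ⟨hv2m, ?_⟩
    have hF : AEMeasurable (fun ω => ‖‖v ω‖ ^ 2‖ₑ) μ := hv2m.enorm
    set F' := hF.mk with hF'
    have hF'm : Measurable F' := hF.measurable_mk
    have hFk : ∀ᵐ a ∂μ, (fun ω => ‖‖v ω‖ ^ 2‖ₑ) =ᵐ[condExpKernel μ m a] F' := by
      refine ae_of_ae_trim hm ?_
      refine Measure.ae_ae_of_ae_comp ?_
      rw [condExpKernel_comp_trim]
      exact hF.ae_eq_mk
    have e1 : ∫⁻ ω, ‖‖v ω‖ ^ 2‖ₑ ∂μ = ∫⁻ ω, F' ω ∂μ := lintegral_congr_ae hF.ae_eq_mk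
    have e2 : ∫⁻ ω, F' ω ∂μ = ∫⁻ a, ∫⁻ y, F' y ∂(condExpKernel μ m a) ∂(μ.trim hm) := by
      conv_lhs => rw [← condExpKernel_comp_trim (μ := μ) hm]
      exact Measure.lintegral_bind (Kernel.aemeasurable _) hF'm.aemeasurable
    have e3 : ∫⁻ a, ∫⁻ y, F' y ∂(condExpKernel μ m a) ∂(μ.trim hm)
        = ∫⁻ a, ∫⁻ y, F' y ∂(condExpKernel μ m a) ∂μ :=
      lintegral_trim hm hF'm.lintegral_kernel
    have e4 : ∫⁻ a, ∫⁻ y, F' y ∂(condExpKernel μ m a) ∂μ ≤ ∫⁻ a, ENNReal.ofReal (C a) ∂μ := by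
      refine lintegral_mono_ae ?_
      filter_upwards [key, hFk] with a ha hb
      rw [← lintegral_congr_ae hb]
      have i1 : Integrable (fun y => ‖v y‖ ^ 2) (condExpKernel μ m a) :=
        ha.1.integrable_norm_pow (by norm_num)
      rw [← ofReal_integral_norm_eq_lintegral_enorm i1]
      refine ENNReal.ofReal_le_ofReal ?_
      simpa using ha.2.2
    rw [HasFiniteIntegral, e1, e2, e3]
    refine e4.trans_lt ?_
    have := iC.2
    refine lt_of_le_of_lt (lintegral_mono fun a => ?_) this
    exact Real.ofReal_le_enorm (C a)
  have hv2 : MemLp v 2 μ := (memLp_two_iff_integrable_sq_norm hvm).2 iv2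
  refine ⟨hv2, hg2, ?_, ?_⟩
  · filter_upwards [condExp_ae_eq_integral_condExpKernel hm (hv2.integrable (by norm_num)),
      key] with ω h1 h2
    rw [h1, h2.2.1]
  · rw [← integral_condExp hm]
    have : ∫ ω, (μ[fun ω => ‖v ω‖ ^ 2 | m]) ω ∂μ ≤ ∫ ω, C ω ∂μ := by
      refine integral_mono_ae integrable_condExp iC ?_
      filter_upwards [condExp_ae_eq_integral_condExpKernel hm iv2, key] with ω h1 h2
      rw [h1]; exact h2.2.2
    refine this.trans (le_of_eq ?_)
    rw [hC, integral_add (iC0.const_mul _) (integrable_const s),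
      integral_const_mul, integral_add (integrable_const _) (ig2.const_mul _), integral_const_mul]
    simp
    exact Or.inl (integral_const_mul _ _)


/-- telescoped inequality, Appendix C of the paper.
In the over-the-air federated PG model, if `0 < α ≤ 1/(m_h L)`, then for every `K ≥ 1`,
`E[J(θ^K)] - J(θ^0) ≤ (α((M-1)σ_h² - M(N+1)m_h²)/(2 M N m_h)) Σ_{k<K} E[‖∇J(θ^k)‖²]
  + α K σ̄²/(2 m_h N²) + α K σ_h² V²/(2 M N m_h)`. -/
theorem overTheAir_telescoped
    {d : ℕ} (hd : 1 ≤ d) {N M : ℕ} (hN : 0 < N) (hM : 0 < M)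
    {Ω : Type*} [mΩ : MeasurableSpace Ω] [StandardBorelSpace Ω] [Nonempty Ω]
    (μ : Measure Ω) [IsProbabilityMeasure μ]
    (m_h σ_h2 V σbar2 α L : ℝ)
    (hm : 0 < m_h) (hσh : 0 ≤ σ_h2) (hV : 0 ≤ V) (hσbar : 0 ≤ σbar2)
    (hL : 0 < L) (hα : 0 < α) (hαL : α ≤ 1 / (m_h * L))
    (J : EuclideanSpace ℝ (Fin d) → ℝ) (hJ : Differentiable ℝ J)
    (hLip : ∀ x y : EuclideanSpace ℝ (Fin d),
      ‖gradient J x - gradient J y‖ ≤ L * ‖x - y‖)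
    (Jstar : ℝ) (hJstar : IsGLB (Set.range J) Jstar)
    (𝓕 : Filtration ℕ mΩ)
    (h : ℕ → Fin N → Ω → ℝ)
    (X : ℕ → Fin N → Fin M → Ω → EuclideanSpace ℝ (Fin d))
    (n : ℕ → Ω → EuclideanSpace ℝ (Fin d))
    (θ : ℕ → Ω → EuclideanSpace ℝ (Fin d))
    (θ0 : EuclideanSpace ℝ (Fin d)) (hθ0 : θ 0 = fun _ => θ0)
    (v : ℕ → Ω → EuclideanSpace ℝ (Fin d))
    (hv : ∀ k, v k = fun ω =>
      (∑ i : Fin N, h k i ω • ((1 / (M : ℝ)) • ∑ m : Fin M, X k i m ω)) + n k ω)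
    (hθ : ∀ k, θ (k + 1) = fun ω => θ k ω - (α / (N : ℝ)) • v k ω)
    (hθmeas : ∀ k, Measurable[𝓕 k] (θ k))
    (hh2 : ∀ k i, MemLp (h k i) 2 μ)
    (hX2 : ∀ k i m, MemLp (X k i m) 2 μ)
    (hn2 : ∀ k, MemLp (n k) 2 μ)
    (hcondind : ∀ k, iCondIndepFun (𝓕 k) (𝓕.le k)
      (otaFam (h k) (X k) (n k)) μ)
    (hhind : ∀ k i, Indep (MeasurableSpace.comap (h k i) inferInstance) (𝓕 k) μ)
    (hnind : ∀ k, Indep (MeasurableSpace.comap (n k) inferInstance) (𝓕 k) μ)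
    (hEh : ∀ k i, ∫ ω, h k i ω ∂μ = m_h)
    (hEh2 : ∀ k i, ∫ ω, (h k i ω) ^ 2 ∂μ = σ_h2)
    (hEn : ∀ k, ∫ ω, n k ω ∂μ = 0)
    (hVn : ∀ k, ∫ ω, ‖n k ω‖ ^ 2 ∂μ ≤ σbar2)
    (hEX : ∀ k i m, μ[X k i m | 𝓕 k] =ᵐ[μ] fun ω => gradient J (θ k ω))
    (hVX : ∀ k i m, ∀ᵐ ω ∂μ, (μ[fun ω' => ‖X k i m ω'‖ ^ 2 | 𝓕 k]) ω ≤ V ^ 2) :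
    ∀ K : ℕ, 1 ≤ K →
      (∫ ω, J (θ K ω) ∂μ) - J θ0 ≤
        (α * (((M : ℝ) - 1) * σ_h2 - (M : ℝ) * ((N : ℝ) + 1) * m_h ^ 2)
            / (2 * (M : ℝ) * (N : ℝ) * m_h))
            * ∑ k ∈ Finset.range K, ∫ ω, ‖gradient J (θ k ω)‖ ^ 2 ∂μ
          + α * (K : ℝ) * σbar2 / (2 * m_h * (N : ℝ) ^ 2)
          + α * (K : ℝ) * σ_h2 * V ^ 2 / (2 * (M : ℝ) * (N : ℝ) * m_h) := by
  have hN' : (0 : ℝ) < N := by exact_mod_cast hN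
  have hM' : (0 : ℝ) < M := by exact_mod_cast hM
  have hstep := fun k => ota_cond hN hM (𝓕 k) μ (𝓕.le k) (h k) (X k) (n k) m_h σ_h2 V σbar2
    (fun ω => gradient J (θ k ω)) (hcondind k) (hh2 k) (hX2 k) (hn2 k) (hhind k) (hnind k)
    (hEh k) (hEh2 k) hσh (hEn k) (hVn k) (hEX k) (hVX k) (v k) (hv k)
  have hθ2 : ∀ k, MemLp (θ k) 2 μ := by
    intro k
    induction k with
    | zero => rw [hθ0]; exact memLp_const _
    | succ k ih =>
      have h1 : MemLp (fun ω => (α / (N:ℝ)) • v k ω) 2 μ := (hstep k).1.const_smul (α / (N:ℝ))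
      rw [hθ k]; exact ih.sub h1
  have hgc : Continuous (gradient J) := by
    have : LipschitzWith ⟨L, hL.le⟩ (gradient J) :=
      LipschitzWith.of_dist_le_mul fun x y => by
        rw [dist_eq_norm, dist_eq_norm]; exact hLip x y
    exact this.continuous
  have hJint : ∀ k, Integrable (fun ω => J (θ k ω)) μ := by
    intro k
    have hm1 : AEStronglyMeasurable (fun ω => J (θ k ω)) μ :=
      hJ.continuous.comp_aestronglyMeasurable (hθ2 k).aestronglyMeasurable
    have hd2 : MemLp (fun ω => θ k ω - θ0) 2 μ := (hθ2 k).sub (memLp_const θ0)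
    have i1 : Integrable (fun ω => inner ℝ (gradient J θ0) (θ k ω - θ0)) μ :=
      memLp_integrable_inner (memLp_const _) hd2
    have i2 : Integrable (fun ω => ‖θ k ω - θ0‖ ^ 2) μ := hd2.integrable_norm_pow (by norm_num)
    have iU : Integrable (fun ω => J θ0 + inner ℝ (gradient J θ0) (θ k ω - θ0)
        + L / 2 * ‖θ k ω - θ0‖ ^ 2) μ := ((integrable_const _).add i1).add (i2.const_mul _)
    refine integrable_of_le_of_le hm1 (g₁ := fun _ => Jstar) (Filter.Eventually.of_forall fun ω => ?_)
      (Filter.Eventually.of_forall fun ω => ?_) (integrable_const _) iU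
    · exact hJstar.1 ⟨_, rfl⟩
    · exact descent_lemma hJ hLip θ0 (θ k ω)
  have hinner : ∀ k, ∫ ω, inner ℝ (gradient J (θ k ω)) (v k ω) ∂μ
      = N * m_h * ∫ ω, ‖gradient J (θ k ω)‖ ^ 2 ∂μ := by
    intro k
    obtain ⟨hv2, hg2, hcv, -⟩ := hstep k
    have hgm : StronglyMeasurable[𝓕 k] (fun ω => gradient J (θ k ω)) :=
      hgc.comp_stronglyMeasurable (hθmeas k).stronglyMeasurable
    have hpull : μ[fun ω => inner ℝ (gradient J (θ k ω)) (v k ω) | 𝓕 k] =ᵐ[μ]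
        fun ω => inner ℝ (gradient J (θ k ω)) ((μ[v k | 𝓕 k]) ω) :=
      condExp_bilin_of_stronglyMeasurable_left (innerSL ℝ) hgm
        (memLp_integrable_inner hg2 hv2) (hv2.integrable (by norm_num))
    rw [← integral_condExp (𝓕.le k), ← integral_const_mul]
    refine integral_congr_ae ?_
    filter_upwards [hpull, hcv] with ω h1 h2
    rw [h1, h2, real_inner_smul_right, real_inner_self_eq_norm_sq]
  have hone : ∀ k, ∫ ω, J (θ (k + 1) ω) ∂μ ≤ ∫ ω, J (θ k ω) ∂μ +
      ((α * (((M : ℝ) - 1) * σ_h2 - (M : ℝ) * ((N : ℝ) + 1) * m_h ^ 2)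
            / (2 * (M : ℝ) * (N : ℝ) * m_h)) * ∫ ω, ‖gradient J (θ k ω)‖ ^ 2 ∂μ
          + α * σbar2 / (2 * m_h * (N : ℝ) ^ 2)
          + α * σ_h2 * V ^ 2 / (2 * (M : ℝ) * (N : ℝ) * m_h)) := by
    intro k
    obtain ⟨hv2, hg2, -, hB⟩ := hstep k
    have hin := hinner k
    have i1 : Integrable (fun ω => inner ℝ (gradient J (θ k ω)) (v k ω)) μ :=
      memLp_integrable_inner hg2 hv2
    have i2 : Integrable (fun ω => ‖v k ω‖ ^ 2) μ := hv2.integrable_norm_pow (by norm_num)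
    have hpt : ∀ ω, J (θ (k + 1) ω) ≤ J (θ k ω)
        + (-(α / N)) * inner ℝ (gradient J (θ k ω)) (v k ω)
        + L / 2 * (α / N) ^ 2 * ‖v k ω‖ ^ 2 := by
      intro ω
      have := descent_lemma hJ hLip (θ k ω) (θ (k + 1) ω)
      have e : θ (k + 1) ω - θ k ω = (-(α / (N : ℝ))) • v k ω := by
        rw [hθ k]; simp
      rw [e, real_inner_smul_right, norm_smul, mul_pow, Real.norm_eq_abs, sq_abs] at this
      linarith
    have j1 : Integrable (fun ω => J (θ k ω)
        + (-(α / N)) * inner ℝ (gradient J (θ k ω)) (v k ω)) μ := (hJint k).add (i1.const_mul _)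
    have hint := integral_mono (hJint (k + 1)) (j1.add (i2.const_mul (L / 2 * (α / N) ^ 2))) hpt
    have e2 : ∫ ω, (J (θ k ω) + (-(α / N)) * inner ℝ (gradient J (θ k ω)) (v k ω)
        + L / 2 * (α / N) ^ 2 * ‖v k ω‖ ^ 2) ∂μ
        = ∫ ω, J (θ k ω) ∂μ + (-(α / N)) * (N * m_h * ∫ ω, ‖gradient J (θ k ω)‖ ^ 2 ∂μ)
          + L / 2 * (α / N) ^ 2 * ∫ ω, ‖v k ω‖ ^ 2 ∂μ := by
      rw [integral_add j1 (i2.const_mul _), integral_add (hJint k) (i1.const_mul _),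
        integral_const_mul, integral_const_mul, hin]
    have hint' := hint.trans_eq e2
    have hB0 : 0 ≤ ∫ ω, ‖v k ω‖ ^ 2 ∂μ := integral_nonneg fun ω => by positivity
    have hcoef : L / 2 * (α / N) ^ 2 ≤ α / (2 * m_h * (N : ℝ) ^ 2) := by
      have h1 : α * (m_h * L) ≤ 1 := by
        rwa [le_div_iff₀ (by positivity)] at hαL
      have e : L / 2 * (α / N) ^ 2 = (α * (m_h * L)) * (α / (2 * m_h * (N : ℝ) ^ 2)) := by
        field_simp
      rw [e]
      exact mul_le_of_le_one_left (by positivity) h1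
    have hfin := (mul_le_mul_of_nonneg_right hcoef hB0).trans
      (mul_le_mul_of_nonneg_left hB (by positivity : 0 ≤ α / (2 * m_h * (N : ℝ) ^ 2)))
    refine hint'.trans ?_
    rw [add_assoc]
    refine add_le_add le_rfl ((add_le_add le_rfl hfin).trans (le_of_eq ?_))
    field_simp
    ring
  intro K _
  induction K with
  | zero => omega
  | succ K ih =>
    have h1 := hone K
    rw [Finset.sum_range_succ, mul_add]
    rcases Nat.eq_zero_or_pos K with h0 | h0
    · subst h0
      have e0 : ∫ ω, J (θ 0 ω) ∂μ = J θ0 := by rw [hθ0]; simp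
      rw [e0] at h1
      simp at h1 ⊢
      linarith
    · have h2 := ih h0
      push_cast
      have e3 : α * ((K : ℝ) + 1) * σbar2 / (2 * m_h * (N : ℝ) ^ 2)
          = α * (K : ℝ) * σbar2 / (2 * m_h * (N : ℝ) ^ 2) + α * σbar2 / (2 * m_h * (N : ℝ) ^ 2) := by
        ring
      have e4 : α * ((K : ℝ) + 1) * σ_h2 * V ^ 2 / (2 * (M : ℝ) * (N : ℝ) * m_h)
          = α * (K : ℝ) * σ_h2 * V ^ 2 / (2 * (M : ℝ) * (N : ℝ) * m_h)
            + α * σ_h2 * V ^ 2 / (2 * (M : ℝ) * (N : ℝ) * m_h) := by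
        ring
      rw [e3, e4]
      linarith
end

section
/- (Theorem 1, convergence of over-the-air federated policy gradient.) In the over-the-air federated PG model, suppose σ_h² ≤ (N+1)·m_h² and 0 < α ≤ 1/(m_h·L), and set Λ = M·(N+1)·m_h² − (M−1)·σ_h² (so Λ ≥ (N+1)·m_h² > 0). Then for every integer K ≥ 1, (1/K)·Σ_{k=0}^{K−1} E[‖∇J(θ^k)‖²] ≤ 2·M·N·m_h·(J(θ^0) − J*)/(α·Λ·K) + M·σ̄²/(N·Λ) + σ_h²·V²/Λ. -/
open MeasureTheory ProbabilityTheory Gradient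

lemma ota_indep_inner {d : ℕ} {Ω : Type*} [MeasurableSpace Ω] {P : Measure Ω}
    {X Y : Ω → EuclideanSpace ℝ (Fin d)} (hXY : IndepFun X Y P)
    (hX : Integrable X P) (hY : Integrable Y P) :
    ∫ ω, inner ℝ (X ω) (Y ω) ∂P = inner ℝ (∫ ω, X ω ∂P) (∫ ω, Y ω ∂P) := by
  have := hXY.integral_bilin hX hY (innerSL ℝ)
  exact this

lemma ota_int_inner {d : ℕ} {Ω : Type*} [MeasurableSpace Ω] {P : Measure Ω}
    {X Y : Ω → EuclideanSpace ℝ (Fin d)} (hX : MemLp X 2 P) (hY : MemLp Y 2 P) :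
    Integrable (fun ω => inner ℝ (X ω) (Y ω)) P := by
  refine Integrable.mono' (hX.norm.integrable_mul hY.norm)
    (hX.aestronglyMeasurable.inner hY.aestronglyMeasurable) (ae_of_all _ fun ω => ?_)
  exact norm_inner_le_norm _ _

lemma ota_sum_sq {d : ℕ} {Ω : Type*} [MeasurableSpace Ω] {P : Measure Ω} [IsProbabilityMeasure P]
    {k : ℕ} {Z : Fin k → Ω → EuclideanSpace ℝ (Fin d)} (hZ : ∀ i, MemLp (Z i) 2 P)
    (hind : ∀ i j, i ≠ j → IndepFun (Z i) (Z j) P) {z : EuclideanSpace ℝ (Fin d)}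
    (hz : ∀ i, ∫ ω, Z i ω ∂P = z) :
    ∫ ω, ‖∑ i, Z i ω‖ ^ 2 ∂P = ∑ i, ∫ ω, ‖Z i ω‖ ^ 2 ∂P + k * (k - 1) * ‖z‖ ^ 2 := by
  have hint : ∀ i j, Integrable (fun ω => inner ℝ (Z i ω) (Z j ω)) P := fun i j =>
    ota_int_inner (hZ i) (hZ j)
  have h1 : ∀ ω, ‖∑ i, Z i ω‖ ^ 2 = ∑ i, ∑ j, inner ℝ (Z i ω) (Z j ω) := fun ω => by
    rw [← real_inner_self_eq_norm_sq, sum_inner]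
    simp_rw [inner_sum]
  simp_rw [h1]
  rw [integral_finsetSum _ (fun i _ => integrable_finsetSum _ (fun j _ => hint i j))]
  simp_rw [integral_finsetSum _ (fun j _ => hint _ j)]
  have h2 : ∀ i j, ∫ ω, inner ℝ (Z i ω) (Z j ω) ∂P =
      (if i = j then ∫ ω, ‖Z i ω‖ ^ 2 ∂P - ‖z‖ ^ 2 else 0) + ‖z‖ ^ 2 := by
    intro i j
    split_ifs with hij
    · subst hij; simp
    · rw [ota_indep_inner (hind i j hij) ((hZ i).integrable one_le_two)
        ((hZ j).integrable one_le_two), hz, hz, real_inner_self_eq_norm_sq, zero_add]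
  simp_rw [h2]
  simp [Finset.sum_add_distrib]
  ring

lemma ota_smul_memLp {d : ℕ} {Ω : Type*} [MeasurableSpace Ω] {P : Measure Ω}
    {h : Ω → ℝ} {X : Ω → EuclideanSpace ℝ (Fin d)} (hh : MemLp h 2 P) (hX : MemLp X 2 P)
    (hind : IndepFun h X P) :
    MemLp (fun ω => h ω • X ω) 2 P ∧
    ∫ ω, ‖h ω • X ω‖ ^ 2 ∂P = (∫ ω, h ω ^ 2 ∂P) * ∫ ω, ‖X ω‖ ^ 2 ∂P := by
  have hi : IndepFun (fun ω => h ω ^ 2) (fun ω => ‖X ω‖ ^ 2) P :=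
    hind.comp (φ := fun x : ℝ => x ^ 2) (ψ := fun x : EuclideanSpace ℝ (Fin d) => ‖x‖ ^ 2)
      (by fun_prop) (by fun_prop)
  have e : ∀ ω, ‖h ω • X ω‖ ^ 2 = h ω ^ 2 * ‖X ω‖ ^ 2 := fun ω => by
    rw [norm_smul, mul_pow, Real.norm_eq_abs, sq_abs]
  have hm : AEStronglyMeasurable (fun ω => h ω • X ω) P :=
    hh.aestronglyMeasurable.smul hX.aestronglyMeasurable
  have i1 : Integrable (fun ω => h ω ^ 2) P := hh.integrable_sq
  have i2 : Integrable (fun ω => ‖X ω‖ ^ 2) P := hX.norm.integrable_sq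
  refine ⟨?_, ?_⟩
  · rw [memLp_two_iff_integrable_sq_norm hm]
    simp_rw [e]
    exact hi.integrable_mul i1 i2
  · simp_rw [e]
    exact hi.integral_fun_mul_eq_mul_integral i1.aestronglyMeasurable i2.aestronglyMeasurable

lemma ota_moments {d N M : ℕ} (hM : 0 < M) {Ω : Type*} [MeasurableSpace Ω] {P : Measure Ω}
    [IsProbabilityMeasure P] {h : Fin N → Ω → ℝ} {X : Fin N → Fin M → Ω → EuclideanSpace ℝ (Fin d)}
    {n : Ω → EuclideanSpace ℝ (Fin d)} (hind : iIndepFun (otaFam h X n) P)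
    (hh : ∀ i, MemLp (h i) 2 P) (hX : ∀ i m, MemLp (X i m) 2 P) (hn : MemLp n 2 P)
    {mh σ V s : ℝ} {g : EuclideanSpace ℝ (Fin d)} (hσ : 0 ≤ σ)
    (h1 : ∀ i, ∫ ω, h i ω ∂P = mh) (h2 : ∀ i, ∫ ω, h i ω ^ 2 ∂P = σ)
    (n1 : ∫ ω, n ω ∂P = 0) (n2 : ∫ ω, ‖n ω‖ ^ 2 ∂P ≤ s)
    (x1 : ∀ i m, ∫ ω, X i m ω ∂P = g) (x2 : ∀ i m, ∫ ω, ‖X i m ω‖ ^ 2 ∂P ≤ V ^ 2)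
    {v : Ω → EuclideanSpace ℝ (Fin d)}
    (hv : v = fun ω => (∑ i : Fin N, h i ω • ((1 / (M : ℝ)) • ∑ m : Fin M, X i m ω)) + n ω) :
    MemLp v 2 P ∧ ∫ ω, v ω ∂P = (N * mh) • g ∧
    ∫ ω, ‖v ω‖ ^ 2 ∂P ≤ N * (σ * (V ^ 2 / M + (M - 1) / M * ‖g‖ ^ 2))
      + N * (N - 1) * (mh ^ 2 * ‖g‖ ^ 2) + s := by
  classical
  have hM' : (0 : ℝ) < M := by exact_mod_cast hM
  have hm : ∀ a, AEMeasurable (otaFam h X n a) P := by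
    rintro (i | ⟨i, m⟩ | _)
    · exact (hh i).aestronglyMeasurable.aemeasurable.prodMk aemeasurable_const
    · exact aemeasurable_const.prodMk (hX i m).aestronglyMeasurable.aemeasurable
    · exact aemeasurable_const.prodMk hn.aestronglyMeasurable.aemeasurable
  -- block independence
  have blk : ∀ (S T : Finset (Fin N ⊕ (Fin N × Fin M) ⊕ Unit)), Disjoint S T →
      IndepFun (fun a (i : S) ↦ otaFam h X n i a) (fun a (i : T) ↦ otaFam h X n i a) P :=
    fun S T hST => hind.indepFun_finset₀ S T hST hm
  let SX : Fin N → Finset (Fin N ⊕ (Fin N × Fin M) ⊕ Unit) := fun i =>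
    Finset.univ.image (fun m => Sum.inr (Sum.inl (i, m)))
  let SY : Fin N → Finset (Fin N ⊕ (Fin N × Fin M) ⊕ Unit) := fun i => insert (Sum.inl i) (SX i)
  have memX : ∀ i m, (Sum.inr (Sum.inl (i, m)) : Fin N ⊕ (Fin N × Fin M) ⊕ Unit) ∈ SX i :=
    fun i m => by simp [SX]
  have memX' : ∀ i m, (Sum.inr (Sum.inl (i, m)) : Fin N ⊕ (Fin N × Fin M) ⊕ Unit) ∈ SY i :=
    fun i m => by simp [SX, SY]
  have memh : ∀ i, (Sum.inl i : Fin N ⊕ (Fin N × Fin M) ⊕ Unit) ∈ SY i :=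
    fun i => by simp [SY]
  let Xb : Fin N → Ω → EuclideanSpace ℝ (Fin d) := fun i ω => (1 / (M : ℝ)) • ∑ m, X i m ω
  let Y : Fin N → Ω → EuclideanSpace ℝ (Fin d) := fun i ω => h i ω • Xb i ω
  let φX : ∀ i, (SX i → ℝ × EuclideanSpace ℝ (Fin d)) → EuclideanSpace ℝ (Fin d) := fun i p =>
    (1 / (M : ℝ)) • ∑ m, (p ⟨_, memX i m⟩).2
  let φY : ∀ i, (SY i → ℝ × EuclideanSpace ℝ (Fin d)) → EuclideanSpace ℝ (Fin d) := fun i p =>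
    (p ⟨_, memh i⟩).1 • ((1 / (M : ℝ)) • ∑ m, (p ⟨_, memX' i m⟩).2)
  have mφX : ∀ i, Measurable (φX i) := fun i => by fun_prop
  have mφY : ∀ i, Measurable (φY i) := fun i => by fun_prop
  have indXX : ∀ i m m', m ≠ m' → IndepFun (X i m) (X i m') P := fun i m m' hne =>
    (hind.indepFun (i := Sum.inr (Sum.inl (i, m))) (j := Sum.inr (Sum.inl (i, m')))
      (by simpa using hne)).comp measurable_snd measurable_snd
  have indhX : ∀ i, IndepFun (h i) (Xb i) P := fun i => by
    let φh : (({Sum.inl i} : Finset (Fin N ⊕ (Fin N × Fin M) ⊕ Unit)) →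
      ℝ × EuclideanSpace ℝ (Fin d)) → ℝ := fun p => (p ⟨Sum.inl i, Finset.mem_singleton_self _⟩).1
    have mφh : Measurable φh := by fun_prop
    exact (blk {Sum.inl i} (SX i) (by simp [SX])).comp mφh (mφX i)
  have indYY : ∀ i j, i ≠ j → IndepFun (Y i) (Y j) P := fun i j hij =>
    (blk (SY i) (SY j) (by
      rw [Finset.disjoint_left]
      rintro a ha hb
      simp only [SY, SX, Finset.mem_insert, Finset.mem_image, Finset.mem_univ, true_and] at ha hb
      rcases ha with rfl | ⟨m, rfl⟩
      · simp [hij] at hb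
      · simp [Ne.symm hij] at hb)).comp (mφY i) (mφY j)
  have indYn : ∀ i, IndepFun (Y i) n P := fun i => by
    let φn : (({Sum.inr (Sum.inr ())} : Finset (Fin N ⊕ (Fin N × Fin M) ⊕ Unit)) →
      ℝ × EuclideanSpace ℝ (Fin d)) → EuclideanSpace ℝ (Fin d) :=
      fun p => (p ⟨Sum.inr (Sum.inr ()), Finset.mem_singleton_self _⟩).2
    have mφn : Measurable φn := by fun_prop
    exact (blk (SY i) {Sum.inr (Sum.inr ())} (by simp [SY, SX])).comp (mφY i) mφn
  have LS : ∀ i, MemLp (fun ω => ∑ m, X i m ω) 2 P := fun i =>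
    memLp_finsetSum _ (fun m _ => hX i m)
  have LXb : ∀ i, MemLp (Xb i) 2 P := fun i => (LS i).const_smul (1 / (M : ℝ))
  have EXb : ∀ i, ∫ ω, Xb i ω ∂P = g := fun i => by
    simp only [Xb]
    rw [integral_smul, integral_finsetSum _ (fun m _ => (hX i m).integrable one_le_two)]
    simp only [x1, Finset.sum_const, Finset.card_univ, Fintype.card_fin]
    rw [← Nat.cast_smul_eq_nsmul ℝ, smul_smul, one_div_mul_cancel hM'.ne', one_smul]
  have EXb2 : ∀ i, ∫ ω, ‖Xb i ω‖ ^ 2 ∂P ≤ V ^ 2 / M + (M - 1) / M * ‖g‖ ^ 2 := fun i => by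
    have e : ∀ ω, ‖Xb i ω‖ ^ 2 = (1 / (M : ℝ)) ^ 2 * ‖∑ m, X i m ω‖ ^ 2 := fun ω => by
      simp only [Xb]; rw [norm_smul, mul_pow, Real.norm_of_nonneg (by positivity)]
    simp_rw [e]
    rw [integral_const_mul, ota_sum_sq (hX i) (indXX i) (x1 i)]
    have hs : ∑ m, ∫ ω, ‖X i m ω‖ ^ 2 ∂P ≤ M * V ^ 2 := by
      refine (Finset.sum_le_sum (fun m _ => x2 i m)).trans ?_
      simp
    calc (1 / (M : ℝ)) ^ 2 * (∑ m, ∫ ω, ‖X i m ω‖ ^ 2 ∂P + M * (M - 1) * ‖g‖ ^ 2)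
        ≤ (1 / (M : ℝ)) ^ 2 * (M * V ^ 2 + M * (M - 1) * ‖g‖ ^ 2) := by gcongr
      _ = _ := by field_simp
  have LY : ∀ i, MemLp (Y i) 2 P := fun i => (ota_smul_memLp (hh i) (LXb i) (indhX i)).1
  have EY : ∀ i, ∫ ω, Y i ω ∂P = mh • g := fun i => by
    simp only [Y]
    rw [(indhX i).integral_fun_smul_eq_smul_integral (hh i).aestronglyMeasurable
      (LXb i).aestronglyMeasurable, h1, EXb]
  have EY2 : ∀ i, ∫ ω, ‖Y i ω‖ ^ 2 ∂P ≤ σ * (V ^ 2 / M + (M - 1) / M * ‖g‖ ^ 2) := fun i => by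
    simp only [Y]
    rw [(ota_smul_memLp (hh i) (LXb i) (indhX i)).2, h2]
    exact mul_le_mul_of_nonneg_left (EXb2 i) hσ
  have LSY : MemLp (fun ω => ∑ i, Y i ω) 2 P := memLp_finsetSum _ (fun m _ => LY m)
  have hv' : v = fun ω => (∑ i, Y i ω) + n ω := hv
  have ESY : ∫ ω, (∑ i, Y i ω) ∂P = (N * mh) • g := by
    rw [integral_finsetSum _ (fun m _ => (LY m).integrable one_le_two)]
    simp only [EY, Finset.sum_const, Finset.card_univ, Fintype.card_fin]
    rw [← Nat.cast_smul_eq_nsmul ℝ, smul_smul]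
  refine ⟨?_, ?_, ?_⟩
  · rw [hv']; exact LSY.add hn
  · rw [hv', integral_add (LSY.integrable one_le_two) (hn.integrable one_le_two), ESY, n1, add_zero]
  · rw [hv']
    have hc : ∀ i, Integrable (fun ω => inner ℝ (Y i ω) (n ω)) P := fun i =>
      ota_int_inner (LY i) hn
    have e : ∀ ω, ‖(∑ i, Y i ω) + n ω‖ ^ 2 =
        ‖∑ i, Y i ω‖ ^ 2 + 2 * (∑ i, inner ℝ (Y i ω) (n ω)) + ‖n ω‖ ^ 2 := fun ω => by
      rw [norm_add_sq_real, sum_inner]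
    simp_rw [e]
    have I1 : Integrable (fun ω => ‖∑ i, Y i ω‖ ^ 2) P := LSY.norm.integrable_sq
    have I2 : Integrable (fun ω => 2 * (∑ i, inner ℝ (Y i ω) (n ω))) P :=
      (integrable_finsetSum _ (fun i _ => hc i)).const_mul 2
    have I3 : Integrable (fun ω => ‖n ω‖ ^ 2) P := hn.norm.integrable_sq
    rw [integral_add (f := fun ω => ‖∑ i, Y i ω‖ ^ 2 + 2 * (∑ i, inner ℝ (Y i ω) (n ω)))
      (I1.add I2) I3, integral_add I1 I2, integral_const_mul,
      integral_finsetSum _ (fun i _ => hc i), ota_sum_sq LY indYY EY]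
    have z : ∀ i, ∫ ω, inner ℝ (Y i ω) (n ω) ∂P = 0 := fun i => by
      rw [ota_indep_inner (indYn i) ((LY i).integrable one_le_two) (hn.integrable one_le_two), n1,
        inner_zero_right]
    simp only [z, Finset.sum_const_zero, mul_zero, add_zero]
    have hs : ∑ i, ∫ ω, ‖Y i ω‖ ^ 2 ∂P ≤ N * (σ * (V ^ 2 / M + (M - 1) / M * ‖g‖ ^ 2)) := by
      refine (Finset.sum_le_sum (fun m _ => EY2 m)).trans ?_
      simp
    rw [norm_smul, mul_pow, Real.norm_eq_abs, sq_abs]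
    gcongr

lemma ota_ae_kernel {Ω : Type*} {m : MeasurableSpace Ω} [mΩ : MeasurableSpace Ω] [StandardBorelSpace Ω]
    {μ : Measure Ω} [IsFiniteMeasure μ] (hm : m ≤ mΩ)
    {p : Ω → Prop} (hp : ∀ᵐ ω ∂μ, p ω) :
    ∀ᵐ ω ∂(μ.trim hm), ∀ᵐ ω' ∂(condExpKernel μ m ω), p ω' := by
  refine Measure.ae_ae_of_ae_comp ?_
  rwa [condExpKernel_comp_trim hm]

lemma ota_iIndepFun_kernel {Ω : Type*} {m : MeasurableSpace Ω} [mΩ : MeasurableSpace Ω] [StandardBorelSpace Ω]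
    {μ : Measure Ω} [IsFiniteMeasure μ] (hm : m ≤ mΩ)
    {ι β : Type*} [Finite ι] [mβ : MeasurableSpace β] [MeasurableSpace.CountablyGenerated β]
    {f : ι → Ω → β} (hf : ∀ i, AEMeasurable (f i) μ) (hind : iCondIndepFun m hm f μ) :
    ∀ᵐ ω ∂μ, iIndepFun f (condExpKernel μ m ω) := by
  choose g hmeas hfg using hf
  have hae : ∀ i, ∀ᵐ ω ∂(μ.trim hm), f i =ᵐ[condExpKernel μ m ω] g i :=
    fun i => ota_ae_kernel hm (hfg i)
  have hind' : Kernel.iIndepFun (fun i => g i) (condExpKernel μ m) (μ.trim hm) :=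
    Kernel.iIndepFun.congr' hind hae
  obtain ⟨A0, hA0c, hA0⟩ := MeasurableSpace.CountablyGenerated.isCountablyGenerated (α := β)
  set A := generateSetAlgebra A0 with hA
  have hAc : A.Countable := countable_generateSetAlgebra hA0c
  have hAg : mβ = MeasurableSpace.generateFrom A := by
    rw [hA, generateFrom_generateSetAlgebra_eq]; exact hA0
  have hApi : IsPiSystem A := fun s hs t ht _ =>
    (isSetAlgebra_generateSetAlgebra).inter_mem hs ht
  have hAm : ∀ s ∈ A, MeasurableSet s := fun s hs => by
    rw [hAg]; exact MeasurableSpace.measurableSet_generateFrom hs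
  have : Countable A := hAc.to_subtype
  have key : ∀ᵐ ω ∂(μ.trim hm), ∀ (S : Finset ι) (s : ι → A),
      condExpKernel μ m ω (⋂ i ∈ S, g i ⁻¹' (s i : Set β)) =
        ∏ i ∈ S, condExpKernel μ m ω (g i ⁻¹' (s i : Set β)) := by
    rw [ae_all_iff]; intro S
    rw [ae_all_iff]; intro s
    exact Kernel.iIndepFun.measure_inter_preimage_eq_mul _ g hind' S
      (sets := fun i => (s i : Set β)) (fun i _ => hAm _ (s i).2)
  have hae' := ae_all_iff.2 hae
  filter_upwards [ae_of_ae_trim hm key, ae_of_ae_trim hm hae'] with ω h1 h2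
  have h3 : iIndepFun (fun i => g i) (condExpKernel μ m ω) := by
    refine iIndepSets.iIndep (m := fun i => MeasurableSpace.comap (g i) mβ)
      (fun i => (hmeas i).comap_le)
      (fun i => {t | ∃ s ∈ A, g i ⁻¹' s = t}) (fun i => hApi.comap _) (fun i => ?_) ?_
    · rw [hAg, MeasurableSpace.comap_generateFrom]; rfl
    · rw [iIndepSets_iff]
      intro S t ht
      classical
      choose! s hs hst using ht
      have hne : A.Nonempty := ⟨∅, (isSetAlgebra_generateSetAlgebra).empty_mem⟩
      let s' : ι → A := fun i => if h : i ∈ S then ⟨s i, hs i h⟩ else ⟨∅, (isSetAlgebra_generateSetAlgebra).empty_mem⟩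
      have := h1 S s'
      have e : ∀ i ∈ S, g i ⁻¹' (s' i : Set β) = t i := fun i hi => by
        simp only [s', hi, dif_pos]; exact hst i hi
      rw [Set.iInter₂_congr e, Finset.prod_congr rfl (fun i hi => by rw [e i hi])] at this
      exact this
  exact h3.congr (fun i => (h2 i).symm)

lemma ota_condExp_indep {Ω : Type*} {m : MeasurableSpace Ω} [mΩ : MeasurableSpace Ω] 
    {μ : Measure Ω} [IsProbabilityMeasure μ] (hm : m ≤ mΩ)
    {β F : Type*} [mβ : MeasurableSpace β] [NormedAddCommGroup F] [NormedSpace ℝ F] [CompleteSpace F]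
    {Y : Ω → β} (hY : AEMeasurable Y μ) (hind : Indep (MeasurableSpace.comap Y mβ) m μ)
    {φ : β → F} (hφ : StronglyMeasurable φ) :
    μ[fun ω => φ (Y ω) | m] =ᵐ[μ] fun _ => ∫ ω, φ (Y ω) ∂μ := by
  have h1 : @IndepFun Ω β Ω mΩ mβ m Y id μ := by
    rw [@IndepFun_iff_Indep Ω β Ω mΩ mβ m, MeasurableSpace.comap_id]; exact hind
  have h2 : @IndepFun Ω β Ω mΩ mβ m (hY.mk Y) id μ := 
    @IndepFun.congr Ω β Ω mΩ μ _ _ mβ m _ _ h1 hY.ae_eq_mk (Filter.EventuallyEq.refl _ _)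
  rw [@IndepFun_iff_Indep Ω β Ω mΩ mβ m, MeasurableSpace.comap_id] at h2
  have h3 : (fun ω => φ (Y ω)) =ᵐ[μ] fun ω => φ (hY.mk Y ω) := by
    filter_upwards [hY.ae_eq_mk] with ω hω
    rw [hω]
  have h4 : μ[fun ω => φ (hY.mk Y ω) | m] =ᵐ[μ] fun _ => ∫ ω, φ (hY.mk Y ω) ∂μ :=
    condExp_indep_eq (hY.measurable_mk.comap_le) hm
      (hφ.comp_measurable (comap_measurable _)) h2
  rw [integral_congr_ae h3]
  exact (condExp_congr_ae h3).trans h4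

lemma ota_integrable_kernel {Ω : Type*} {m : MeasurableSpace Ω} [mΩ : MeasurableSpace Ω] [StandardBorelSpace Ω]
    {μ : Measure Ω} [IsProbabilityMeasure μ] (hm : m ≤ mΩ)
    {f : Ω → ℝ} (hf : AEStronglyMeasurable f μ) (h0 : ∀ ω, 0 ≤ f ω) (C : ℝ)
    (hC : ∀ᵐ ω ∂μ, Integrable f (condExpKernel μ m ω) ∧ ∫ y, f y ∂(condExpKernel μ m ω) ≤ C) :
    Integrable f μ := by
  refine ⟨hf, ?_⟩
  obtain ⟨g, hgm, hfg⟩ := hf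
  rw [hasFiniteIntegral_iff_enorm]
  have hg : Measurable (fun ω => ‖g ω‖ₑ) := hgm.measurable.enorm
  have e1 : ∫⁻ ω, ‖f ω‖ₑ ∂μ = ∫⁻ ω, ‖g ω‖ₑ ∂μ := by
    refine lintegral_congr_ae ?_
    filter_upwards [hfg] with ω hω
    rw [hω]
  have e2 : ∫⁻ ω, ‖g ω‖ₑ ∂μ = ∫⁻ ω, ∫⁻ y, ‖g y‖ₑ ∂(condExpKernel μ m ω) ∂μ := by
    conv_lhs => rw [← condExpKernel_comp_trim (μ := μ) hm]
    rw [Measure.lintegral_bind (Kernel.aemeasurable _) hg.aemeasurable, lintegral_trim hm]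
    exact hg.lintegral_kernel
  rw [e1, e2]
  refine lt_of_le_of_lt (lintegral_mono_ae (g := fun _ => ENNReal.ofReal C) ?_) (by simp)
  filter_upwards [hC, ae_of_ae_trim hm (ota_ae_kernel hm hfg)] with ω h1 h2
  have : ∫⁻ y, ‖g y‖ₑ ∂(condExpKernel μ m ω) = ∫⁻ y, ENNReal.ofReal (f y) ∂(condExpKernel μ m ω) := by
    refine lintegral_congr_ae ?_
    filter_upwards [h2] with y hy
    rw [← hy, Real.enorm_of_nonneg (h0 y)]
  rw [this, ← ofReal_integral_eq_lintegral_ofReal h1.1 (ae_of_all _ h0)]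
  exact ENNReal.ofReal_le_ofReal h1.2

lemma ota_descent {E : Type*} [NormedAddCommGroup E] [InnerProductSpace ℝ E] [CompleteSpace E]
    {J : E → ℝ} (hJ : Differentiable ℝ J) {L : ℝ}
    (hLip : ∀ x y : E, ‖gradient J x - gradient J y‖ ≤ L * ‖x - y‖) (x u : E) :
    J (x + u) ≤ J x + inner ℝ (gradient J x) u + L / 2 * ‖u‖ ^ 2 := by
  have hd : ∀ t : ℝ, HasDerivAt (fun t : ℝ => J (x + t • u) - t * inner ℝ (gradient J x) u
      - L / 2 * t ^ 2 * ‖u‖ ^ 2)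
      (inner ℝ (gradient J (x + t • u)) u - inner ℝ (gradient J x) u - L * t * ‖u‖ ^ 2) t := by
    intro t
    have h1 : HasFDerivAt J (InnerProductSpace.toDual ℝ E (gradient J (x + t • u))) (x + t • u) :=
      (hJ _).hasGradientAt
    have h2 : HasDerivAt (fun t : ℝ => x + t • u) u t := by
      simpa using ((hasDerivAt_id t).smul_const u).const_add x
    have h3 := h1.comp_hasDerivAt t h2
    have h4 := (h3.sub ((hasDerivAt_id t).mul_const (inner ℝ (gradient J x) u))).sub
      (((hasDerivAt_pow 2 t).const_mul (L / 2)).mul_const (‖u‖ ^ 2))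
    convert! h4 using 1
    simp only [InnerProductSpace.toDual_apply_apply]
    push_cast
    ring
  have hanti : AntitoneOn (fun t : ℝ => J (x + t • u) - t * inner ℝ (gradient J x) u
      - L / 2 * t ^ 2 * ‖u‖ ^ 2) (Set.Icc 0 1) := by
    refine antitoneOn_of_deriv_nonpos (convex_Icc 0 1)
      (fun t _ => (hd t).continuousAt.continuousWithinAt)
      (fun t _ => (hd t).differentiableAt.differentiableWithinAt) (fun t ht => ?_)
    rw [interior_Icc] at ht
    rw [(hd t).deriv, ← inner_sub_left]
    have h1 := real_inner_le_norm (gradient J (x + t • u) - gradient J x) u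
    have h2 := hLip (x + t • u) x
    rw [add_sub_cancel_left, norm_smul, Real.norm_of_nonneg ht.1.le] at h2
    have h3 := mul_le_mul_of_nonneg_right h2 (norm_nonneg u)
    nlinarith
  have := hanti (Set.left_mem_Icc.2 zero_le_one) (Set.right_mem_Icc.2 zero_le_one) zero_le_one
  simp only [zero_smul, one_smul, add_zero] at this
  linarith

lemma ota_memLp_kernel {Ω : Type*} {m : MeasurableSpace Ω} [mΩ : MeasurableSpace Ω]
    [StandardBorelSpace Ω] {μ : Measure Ω} [IsProbabilityMeasure μ] (hm : m ≤ mΩ)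
    {F : Type*} [NormedAddCommGroup F] {f : Ω → F} (hf : MemLp f 2 μ) :
    ∀ᵐ ω ∂μ, MemLp f 2 (condExpKernel μ m ω) := by
  have h1 : Integrable (fun ω => ‖f ω‖ ^ 2) μ := hf.norm.integrable_sq
  obtain ⟨g, hg, hfg⟩ := hf.aestronglyMeasurable
  filter_upwards [h1.condExpKernel_ae (m := m), ae_of_ae_trim hm (ota_ae_kernel hm hfg)] with ω a b
  exact (memLp_two_iff_integrable_sq_norm ⟨g, hg, b⟩).2 a

lemma ota_jensen {Ω : Type*} [MeasurableSpace Ω] {P : Measure Ω} [IsProbabilityMeasure P]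
    {d : ℕ} {X : Ω → EuclideanSpace ℝ (Fin d)} (hX : MemLp X 2 P) :
    ‖∫ ω, X ω ∂P‖ ^ 2 ≤ ∫ ω, ‖X ω‖ ^ 2 ∂P := by
  have h1 : ‖∫ ω, X ω ∂P‖ ≤ ∫ ω, ‖X ω‖ ∂P := norm_integral_le_integral_norm _
  have h2 := variance_nonneg (fun ω => ‖X ω‖) P
  rw [variance_eq_sub hX.norm] at h2
  have h3 : ‖∫ ω, X ω ∂P‖ ^ 2 ≤ (∫ ω, ‖X ω‖ ∂P) ^ 2 := by gcongr
  simp only [Pi.pow_apply] at h2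
  linarith

lemma ota_step {d N M : ℕ} (hN : 0 < N) (hM : 0 < M) {Ω : Type*}
    {m : MeasurableSpace Ω} [mΩ : MeasurableSpace Ω] [StandardBorelSpace Ω]
    {μ : Measure Ω} [IsProbabilityMeasure μ] (hm : m ≤ mΩ)
    {h : Fin N → Ω → ℝ} {X : Fin N → Fin M → Ω → EuclideanSpace ℝ (Fin d)}
    {n : Ω → EuclideanSpace ℝ (Fin d)}
    {mh σ V s : ℝ} {g : Ω → EuclideanSpace ℝ (Fin d)} (hσ : 0 ≤ σ)
    (hg : StronglyMeasurable[m] g)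
    (hh2 : ∀ i, MemLp (h i) 2 μ) (hX2 : ∀ i m, MemLp (X i m) 2 μ) (hn2 : MemLp n 2 μ)
    (hcond : iCondIndepFun m hm (otaFam h X n) μ)
    (hhind : ∀ i, Indep (MeasurableSpace.comap (h i) inferInstance) m μ)
    (hnind : Indep (MeasurableSpace.comap n inferInstance) m μ)
    (hEh : ∀ i, ∫ ω, h i ω ∂μ = mh)
    (hEh2 : ∀ i, ∫ ω, (h i ω) ^ 2 ∂μ = σ)
    (hEn : ∫ ω, n ω ∂μ = 0)
    (hVn : ∫ ω, ‖n ω‖ ^ 2 ∂μ ≤ s)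
    (hEX : ∀ i j, μ[X i j | m] =ᵐ[μ] g)
    (hVX : ∀ i j, ∀ᵐ ω ∂μ, (μ[fun ω' => ‖X i j ω'‖ ^ 2 | m]) ω ≤ V ^ 2)
    {v : Ω → EuclideanSpace ℝ (Fin d)}
    (hv : v = fun ω => (∑ i : Fin N, h i ω • ((1 / (M : ℝ)) • ∑ m : Fin M, X i m ω)) + n ω) :
    MemLp v 2 μ ∧ MemLp g 2 μ ∧
    ∫ ω, inner ℝ (g ω) (v ω) ∂μ = N * mh * ∫ ω, ‖g ω‖ ^ 2 ∂μ ∧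
    ∫ ω, ‖v ω‖ ^ 2 ∂μ ≤ N * (σ * (V ^ 2 / M + (M - 1) / M * ∫ ω, ‖g ω‖ ^ 2 ∂μ))
      + N * (N - 1) * (mh ^ 2 * ∫ ω, ‖g ω‖ ^ 2 ∂μ) + s := by
  have hM' : (1 : ℝ) ≤ M := by exact_mod_cast hM
  have hN' : (1 : ℝ) ≤ N := by exact_mod_cast hN
  have hfm : ∀ a, AEMeasurable (otaFam h X n a) μ := by
    rintro (i | ⟨i, j⟩ | _)
    · exact (hh2 i).aestronglyMeasurable.aemeasurable.prodMk aemeasurable_const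
    · exact aemeasurable_const.prodMk (hX2 i j).aestronglyMeasurable.aemeasurable
    · exact aemeasurable_const.prodMk hn2.aestronglyMeasurable.aemeasurable
  have vm : AEStronglyMeasurable v μ := by
    rw [hv]
    refine AEStronglyMeasurable.add ?_ hn2.aestronglyMeasurable
    refine Finset.aestronglyMeasurable_fun_sum _ fun i _ => ?_
    have hS : AEStronglyMeasurable (fun ω => ∑ m, X i m ω) μ :=
      Finset.aestronglyMeasurable_fun_sum _ fun j _ => (hX2 i j).aestronglyMeasurable
    exact (hh2 i).aestronglyMeasurable.smul (hS.const_smul (1 / (M : ℝ)))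
  have k0 := ota_iIndepFun_kernel hm hfm hcond
  have k1 : ∀ᵐ ω ∂μ, ∀ i, MemLp (h i) 2 (condExpKernel μ m ω) :=
    ae_all_iff.2 fun i => ota_memLp_kernel hm (hh2 i)
  have k2 : ∀ᵐ ω ∂μ, ∀ i j, MemLp (X i j) 2 (condExpKernel μ m ω) :=
    ae_all_iff.2 fun i => ae_all_iff.2 fun j => ota_memLp_kernel hm (hX2 i j)
  have k3 : ∀ᵐ ω ∂μ, MemLp n 2 (condExpKernel μ m ω) := ota_memLp_kernel hm hn2
  have k4 : ∀ᵐ ω ∂μ, ∀ i, ∫ y, h i y ∂(condExpKernel μ m ω) = mh := ae_all_iff.2 fun i => by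
    filter_upwards [condExp_ae_eq_integral_condExpKernel hm ((hh2 i).integrable one_le_two),
      ota_condExp_indep hm (hh2 i).aestronglyMeasurable.aemeasurable (hhind i)
        (φ := fun x : ℝ => x) stronglyMeasurable_id] with ω a b
    rw [← a, ← hEh i]; exact b
  have k5 : ∀ᵐ ω ∂μ, ∀ i, ∫ y, h i y ^ 2 ∂(condExpKernel μ m ω) = σ := ae_all_iff.2 fun i => by
    filter_upwards [condExp_ae_eq_integral_condExpKernel hm ((hh2 i).integrable_sq),
      ota_condExp_indep hm (hh2 i).aestronglyMeasurable.aemeasurable (hhind i)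
        (φ := fun x : ℝ => x ^ 2) (by fun_prop)] with ω a b
    rw [← a, ← hEh2 i]; exact b
  have k6 : ∀ᵐ ω ∂μ, ∫ y, n y ∂(condExpKernel μ m ω) = 0 := by
    filter_upwards [condExp_ae_eq_integral_condExpKernel hm (hn2.integrable one_le_two),
      ota_condExp_indep hm hn2.aestronglyMeasurable.aemeasurable hnind
        (φ := fun x : EuclideanSpace ℝ (Fin d) => x) stronglyMeasurable_id] with ω a b
    rw [← a, ← hEn]; exact b
  have k7 : ∀ᵐ ω ∂μ, ∫ y, ‖n y‖ ^ 2 ∂(condExpKernel μ m ω) ≤ s := by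
    filter_upwards [condExp_ae_eq_integral_condExpKernel hm (hn2.norm.integrable_sq),
      ota_condExp_indep hm hn2.aestronglyMeasurable.aemeasurable hnind
        (φ := fun x : EuclideanSpace ℝ (Fin d) => ‖x‖ ^ 2) (by fun_prop)] with ω a b
    rw [← a]; exact b.le.trans hVn
  have k8 : ∀ᵐ ω ∂μ, ∀ i j, ∫ y, X i j y ∂(condExpKernel μ m ω) = g ω :=
    ae_all_iff.2 fun i => ae_all_iff.2 fun j => by
      filter_upwards [condExp_ae_eq_integral_condExpKernel hm ((hX2 i j).integrable one_le_two),
        hEX i j] with ω a b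
      rw [← a, ← b]
  have k9 : ∀ᵐ ω ∂μ, ∀ i j, ∫ y, ‖X i j y‖ ^ 2 ∂(condExpKernel μ m ω) ≤ V ^ 2 :=
    ae_all_iff.2 fun i => ae_all_iff.2 fun j => by
      filter_upwards [condExp_ae_eq_integral_condExpKernel hm ((hX2 i j).norm.integrable_sq),
        hVX i j] with ω a b
      rw [← a]; exact b
  have key : ∀ᵐ ω ∂μ, MemLp v 2 (condExpKernel μ m ω) ∧
      ∫ y, v y ∂(condExpKernel μ m ω) = (N * mh) • g ω ∧
      ∫ y, ‖v y‖ ^ 2 ∂(condExpKernel μ m ω) ≤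
        N * (σ * (V ^ 2 / M + (M - 1) / M * ‖g ω‖ ^ 2))
        + N * (N - 1) * (mh ^ 2 * ‖g ω‖ ^ 2) + s := by
    filter_upwards [k0, k1, k2, k3, k4, k5, k6, k7, k8, k9] with ω a0 a1 a2 a3 a4 a5 a6 a7 a8 a9
    exact ota_moments hM a0 a1 a2 a3 hσ a4 a5 a6 a7 a8 a9 hv
  have gb : ∀ᵐ ω ∂μ, ‖g ω‖ ^ 2 ≤ V ^ 2 := by
    filter_upwards [k2, k8, k9] with ω a2 a8 a9
    have := ota_jensen (a2 ⟨0, hN⟩ ⟨0, hM⟩)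
    rw [a8] at this
    exact this.trans (a9 _ _)
  have gm : AEStronglyMeasurable g μ := (hg.mono hm).aestronglyMeasurable
  have gL : MemLp g 2 μ := by
    refine MemLp.of_bound gm |V| ?_
    filter_upwards [gb] with ω a
    have := sq_le_sq.1 a
    simpa using this
  have gI : Integrable (fun ω => ‖g ω‖ ^ 2) μ := gL.norm.integrable_sq
  have v2I : Integrable (fun ω => ‖v ω‖ ^ 2) μ := by
    refine ota_integrable_kernel hm (vm.norm.pow 2) (fun ω => by positivity)
      (N * (σ * (V ^ 2 / M + (M - 1) / M * V ^ 2)) + N * (N - 1) * (mh ^ 2 * V ^ 2) + s) ?_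
    filter_upwards [key, gb] with ω a b
    refine ⟨a.1.norm.integrable_sq, a.2.2.trans ?_⟩
    have e1 : (0 : ℝ) ≤ (M - 1) / M := div_nonneg (by linarith) (by linarith)
    have e2 : (0 : ℝ) ≤ N - 1 := by linarith
    gcongr
  have vL : MemLp v 2 μ := (memLp_two_iff_integrable_sq_norm vm).2 v2I
  have vI : Integrable v μ := vL.integrable one_le_two
  refine ⟨vL, gL, ?_, ?_⟩
  · have e1 : μ[fun ω => innerSL ℝ (g ω) (v ω) | m] =ᵐ[μ] fun ω => innerSL ℝ (g ω) (μ[v | m] ω) :=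
      condExp_bilin_of_stronglyMeasurable_left (innerSL ℝ) hg (ota_int_inner gL vL) vI
    have e2 : ∫ ω, inner ℝ (g ω) (v ω) ∂μ = ∫ ω, (μ[fun ω => innerSL ℝ (g ω) (v ω) | m]) ω ∂μ := by
      rw [integral_condExp hm]; rfl
    rw [e2, ← integral_const_mul]
    refine integral_congr_ae ?_
    filter_upwards [e1, key, condExp_ae_eq_integral_condExpKernel hm vI] with ω a b c
    rw [a, c, b.2.1]
    rw [innerSL_apply_apply, inner_smul_right, real_inner_self_eq_norm_sq]
  · have e2 : ∫ ω, ‖v ω‖ ^ 2 ∂μ = ∫ ω, (μ[fun ω => ‖v ω‖ ^ 2 | m]) ω ∂μ := by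
      rw [integral_condExp hm]
    have J1 : Integrable (fun ω => N * (σ * (V ^ 2 / M + (M - 1) / M * ‖g ω‖ ^ 2))) μ :=
      (((integrable_const _).add (gI.const_mul _)).const_mul _).const_mul _
    have J2 : Integrable (fun ω => N * (N - 1) * (mh ^ 2 * ‖g ω‖ ^ 2)) μ :=
      (gI.const_mul _).const_mul _
    have e3 : ∫ ω, (μ[fun ω => ‖v ω‖ ^ 2 | m]) ω ∂μ ≤
        ∫ ω, (N * (σ * (V ^ 2 / M + (M - 1) / M * ‖g ω‖ ^ 2))
        + N * (N - 1) * (mh ^ 2 * ‖g ω‖ ^ 2) + s) ∂μ := by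
      refine integral_mono_ae integrable_condExp ((J1.add J2).add (integrable_const s)) ?_
      filter_upwards [key, condExp_ae_eq_integral_condExpKernel hm v2I] with ω b c
      rw [c]; exact b.2.2
    rw [e2]
    refine e3.trans (le_of_eq ?_)
    rw [integral_add (f := fun ω => N * (σ * (V ^ 2 / M + (M - 1) / M * ‖g ω‖ ^ 2))
        + N * (N - 1) * (mh ^ 2 * ‖g ω‖ ^ 2)) (J1.add J2) (integrable_const s),
      integral_add J1 J2, integral_const_mul, integral_const_mul, integral_const_mul,
      integral_const_mul, integral_add (integrable_const _) (gI.const_mul _), integral_const_mul]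
    simp

/-- Theorem 1 of the paper: convergence of over-the-air federated policy
gradient.  If `σ_h² ≤ (N+1) m_h²`, `0 < α ≤ 1/(m_h L)` and
`Λ = M(N+1)m_h² - (M-1)σ_h²`, then for every `K ≥ 1`,
`(1/K) Σ_{k<K} E[‖∇J(θ^k)‖²] ≤ 2 M N m_h (J(θ⁰) - J*)/(α Λ K) + M σ̄²/(N Λ) + σ_h² V²/Λ`. -/
theorem overTheAir_convergence
    {d : ℕ} (hd : 1 ≤ d) {N M : ℕ} (hN : 0 < N) (hM : 0 < M)
    {Ω : Type*} [mΩ : MeasurableSpace Ω] [StandardBorelSpace Ω] [Nonempty Ω]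
    (μ : Measure Ω) [IsProbabilityMeasure μ]
    (m_h σ_h2 V σbar2 α L : ℝ)
    (hm : 0 < m_h) (hσh : 0 ≤ σ_h2) (hV : 0 ≤ V) (hσbar : 0 ≤ σbar2)
    (hL : 0 < L) (hα : 0 < α) (hαL : α ≤ 1 / (m_h * L))
    (J : EuclideanSpace ℝ (Fin d) → ℝ) (hJ : Differentiable ℝ J)
    (hLip : ∀ x y : EuclideanSpace ℝ (Fin d),
      ‖gradient J x - gradient J y‖ ≤ L * ‖x - y‖)
    (Jstar : ℝ) (hJstar : IsGLB (Set.range J) Jstar)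
    (𝓕 : Filtration ℕ mΩ)
    (h : ℕ → Fin N → Ω → ℝ)
    (X : ℕ → Fin N → Fin M → Ω → EuclideanSpace ℝ (Fin d))
    (n : ℕ → Ω → EuclideanSpace ℝ (Fin d))
    (θ : ℕ → Ω → EuclideanSpace ℝ (Fin d))
    (θ0 : EuclideanSpace ℝ (Fin d)) (hθ0 : θ 0 = fun _ => θ0)
    (v : ℕ → Ω → EuclideanSpace ℝ (Fin d))
    (hv : ∀ k, v k = fun ω =>
      (∑ i : Fin N, h k i ω • ((1 / (M : ℝ)) • ∑ m : Fin M, X k i m ω)) + n k ω)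
    (hθ : ∀ k, θ (k + 1) = fun ω => θ k ω - (α / (N : ℝ)) • v k ω)
    (hθmeas : ∀ k, Measurable[𝓕 k] (θ k))
    (hh2 : ∀ k i, MemLp (h k i) 2 μ)
    (hX2 : ∀ k i m, MemLp (X k i m) 2 μ)
    (hn2 : ∀ k, MemLp (n k) 2 μ)
    (hcondind : ∀ k, iCondIndepFun (𝓕 k) (𝓕.le k)
      (otaFam (h k) (X k) (n k)) μ)
    (hhind : ∀ k i, Indep (MeasurableSpace.comap (h k i) inferInstance) (𝓕 k) μ)
    (hnind : ∀ k, Indep (MeasurableSpace.comap (n k) inferInstance) (𝓕 k) μ)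
    (hEh : ∀ k i, ∫ ω, h k i ω ∂μ = m_h)
    (hEh2 : ∀ k i, ∫ ω, (h k i ω) ^ 2 ∂μ = σ_h2)
    (hEn : ∀ k, ∫ ω, n k ω ∂μ = 0)
    (hVn : ∀ k, ∫ ω, ‖n k ω‖ ^ 2 ∂μ ≤ σbar2)
    (hEX : ∀ k i m, μ[X k i m | 𝓕 k] =ᵐ[μ] fun ω => gradient J (θ k ω))
    (hVX : ∀ k i m, ∀ᵐ ω ∂μ, (μ[fun ω' => ‖X k i m ω'‖ ^ 2 | 𝓕 k]) ω ≤ V ^ 2)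
    (hchan : σ_h2 ≤ ((N : ℝ) + 1) * m_h ^ 2)
    (Λ : ℝ) (hΛ : Λ = (M : ℝ) * ((N : ℝ) + 1) * m_h ^ 2 - ((M : ℝ) - 1) * σ_h2) :
    ∀ K : ℕ, 1 ≤ K →
      (1 / (K : ℝ)) * ∑ k ∈ Finset.range K, ∫ ω, ‖gradient J (θ k ω)‖ ^ 2 ∂μ ≤
        2 * (M : ℝ) * (N : ℝ) * m_h * (J θ0 - Jstar) / (α * Λ * (K : ℝ))
          + (M : ℝ) * σbar2 / ((N : ℝ) * Λ)
          + σ_h2 * V ^ 2 / Λ := by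
  have hN' : (1 : ℝ) ≤ N := by exact_mod_cast hN
  have hM' : (1 : ℝ) ≤ M := by exact_mod_cast hM
  have hN0 : (0 : ℝ) < N := by linarith
  have hM0 : (0 : ℝ) < M := by linarith
  have hΛ0 : 0 < Λ := by
    have e1 : ((M : ℝ) - 1) * σ_h2 ≤ ((M : ℝ) - 1) * (((N : ℝ) + 1) * m_h ^ 2) :=
      mul_le_mul_of_nonneg_left hchan (by linarith)
    have e2 : 0 < ((N : ℝ) + 1) * m_h ^ 2 := by positivity
    rw [hΛ]; nlinarith
  have gc : Continuous (gradient J) := by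
    have : LipschitzWith (Real.toNNReal L) (gradient J) :=
      LipschitzWith.of_dist_le_mul fun x y => by
        rw [dist_eq_norm, dist_eq_norm, Real.coe_toNNReal _ hL.le]; exact hLip x y
    exact this.continuous
  have gmeas : ∀ k, StronglyMeasurable[𝓕 k] (fun ω => gradient J (θ k ω)) := fun k =>
    (gc.measurable.comp (hθmeas k)).stronglyMeasurable
  have S := fun k => ota_step (m := 𝓕 k) hN hM (𝓕.le k) hσh (gmeas k) (hh2 k) (hX2 k) (hn2 k)
    (hcondind k) (hhind k) (hnind k) (hEh k) (hEh2 k) (hEn k) (hVn k) (hEX k) (hVX k) (hv k)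
  have θL : ∀ k, MemLp (θ k) 2 μ := by
    intro k
    induction k with
    | zero => rw [hθ0]; exact memLp_const _
    | succ k ih => rw [hθ k]; exact ih.sub ((S k).1.const_smul (α / (N : ℝ)))
  have hlow : ∀ x, Jstar ≤ J x := fun x => hJstar.1 ⟨x, rfl⟩
  have JI : ∀ k, Integrable (fun ω => J (θ k ω)) μ := by
    intro k
    have hc : MemLp (fun _ : Ω => gradient J 0) 2 μ := memLp_const _
    have u1 : Integrable (fun ω => |Jstar| + (|J 0| + |inner ℝ (gradient J 0) (θ k ω)|
        + L / 2 * ‖θ k ω‖ ^ 2)) μ :=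
      (integrable_const _).add (((integrable_const _).add (ota_int_inner hc (θL k)).abs).add
        ((θL k).norm.integrable_sq.const_mul _))
    refine u1.mono' (hJ.continuous.comp_aestronglyMeasurable (θL k).aestronglyMeasurable)
      (ae_of_all _ fun ω => ?_)
    have d1 := ota_descent hJ hLip 0 (θ k ω)
    rw [zero_add] at d1
    have d2 := hlow (θ k ω)
    have d3 := neg_abs_le Jstar
    have d4 := le_abs_self (J 0)
    have d5 := le_abs_self (inner ℝ (gradient J 0) (θ k ω))
    have d6 := abs_nonneg Jstar
    have d7 := abs_nonneg (J 0)
    have d8 := abs_nonneg (inner ℝ (gradient J 0) (θ k ω))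
    have d9 : 0 ≤ L / 2 * ‖θ k ω‖ ^ 2 := by positivity
    rw [Real.norm_eq_abs, abs_le]
    constructor <;> linarith
  set G : ℕ → ℝ := fun k => ∫ ω, ‖gradient J (θ k ω)‖ ^ 2 ∂μ with hG
  set c : ℝ := α * Λ / (2 * N * M * m_h) with hc
  set D : ℝ := α / (2 * N ^ 2 * m_h) * (N * σ_h2 * V ^ 2 / M + σbar2) with hD
  have step : ∀ k, ∫ ω, J (θ (k + 1) ω) ∂μ ≤ ∫ ω, J (θ k ω) ∂μ - c * G k + D := by
    intro k
    obtain ⟨vL, gL, e1, e2⟩ := S k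
    have iI := ota_int_inner gL vL
    have vI : Integrable (fun ω => ‖v k ω‖ ^ 2) μ := vL.norm.integrable_sq
    have m1 : ∫ ω, J (θ (k + 1) ω) ∂μ ≤ ∫ ω, (J (θ k ω)
        + (-(α / N)) * inner ℝ (gradient J (θ k ω)) (v k ω)
        + (L / 2 * (α / N) ^ 2) * ‖v k ω‖ ^ 2) ∂μ := by
      refine integral_mono (JI (k + 1)) (((JI k).add (iI.const_mul _)).add (vI.const_mul _))
        fun ω => ?_
      have d1 := ota_descent hJ hLip (θ k ω) ((-(α / (N : ℝ))) • v k ω)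
      rw [inner_smul_right, norm_smul, neg_smul, ← sub_eq_add_neg, mul_pow, norm_neg,
        Real.norm_eq_abs, sq_abs] at d1
      simp only [hθ k]
      linarith
    rw [integral_add (f := fun ω => J (θ k ω)
        + (-(α / N)) * inner ℝ (gradient J (θ k ω)) (v k ω)) ((JI k).add (iI.const_mul _))
        (vI.const_mul _), integral_add (JI k) (iI.const_mul _), integral_const_mul,
        integral_const_mul, e1] at m1
    have hW : 0 ≤ ∫ ω, ‖v k ω‖ ^ 2 ∂μ := integral_nonneg fun ω => by positivity
    have hco : L / 2 * (α / N) ^ 2 ≤ α / (2 * N ^ 2 * m_h) := by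
      have h1 : α * (m_h * L) ≤ 1 := (le_div_iff₀ (by positivity)).1 hαL
      rw [le_div_iff₀ (by positivity)]
      have h2 : L / 2 * (α / N) ^ 2 * (2 * N ^ 2 * m_h) = α * (α * (m_h * L)) := by
        field_simp
      rw [h2]; nlinarith
    have m2 := (mul_le_mul_of_nonneg_right hco hW).trans
      (mul_le_mul_of_nonneg_left e2 (by positivity))
    have m3 : -(α / N) * (N * m_h * G k) + α / (2 * N ^ 2 * m_h) *
        (N * (σ_h2 * (V ^ 2 / M + (M - 1) / M * G k)) + N * (N - 1) * (m_h ^ 2 * G k) + σbar2)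
        = - c * G k + D := by
      rw [hc, hD, hΛ]
      field_simp
      ring
    simp only [hG] at m3 ⊢
    linarith
  have tel : ∀ K : ℕ, ∫ ω, J (θ K ω) ∂μ ≤ J θ0 - c * ∑ k ∈ Finset.range K, G k + K * D := by
    intro K
    induction K with
    | zero => simp [hθ0]
    | succ K ih =>
      rw [Finset.sum_range_succ]
      have := step K
      push_cast
      linarith
  intro K hK
  have hK0 : (0 : ℝ) < K := by exact_mod_cast hK
  have t1 := tel K
  have t2 : Jstar ≤ ∫ ω, J (θ K ω) ∂μ := by
    have := integral_mono (integrable_const Jstar) (JI K) fun ω => hlow (θ K ω)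
    simpa using this
  have c0 : 0 < c := by positivity
  have t3 : (∑ k ∈ Finset.range K, G k) ≤ (J θ0 - Jstar + K * D) / c := by
    rw [le_div_iff₀ c0]; linarith
  have t4 : (1 / (K : ℝ)) * ∑ k ∈ Finset.range K, G k ≤
      (1 / (K : ℝ)) * ((J θ0 - Jstar + K * D) / c) :=
    mul_le_mul_of_nonneg_left t3 (by positivity)
  refine t4.trans (le_of_eq ?_)
  rw [hc, hD]
  field_simp
  ring
end
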